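/- arXiv:1305.1511 — 10 statements merged into one kernel-verified Lean document; each statement's English description precedes it below -/
import Mathlib

section
/- Let V be a real vector space of dimension 2n+1 and let (φ, ξ, η) be an almost paracontact structure on V. If g is any nondegenerate symmetric bilinear form on V satisfying the compatibility condition g(φX, φY) = −g(X, Y) + η(X)η(Y) for all X, Y ∈ V, then g necessarily has signature (n+1, n), i.e. a maximal positive-definite subspace has dimension n+1 and a maximal negative-definite subspace has dimension n. -/
theorem aux_span_pos {ι V : Type*} [Fintype ι] [AddCommGroup V] [Module ℝ V]
    (g : LinearMap.BilinForm ℝ V) (w : ι → V) (h0 : ∀ i j, i ≠ j → g (w i) (w j) = 0)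
    (hp : ∀ i, 0 < g (w i) (w i)) :
    ∀ x ∈ Submodule.span ℝ (Set.range w), x ≠ 0 → 0 < g x x := by
  classical
  intro x hx hne
  obtain ⟨c, rfl⟩ := (Submodule.mem_span_range_iff_exists_fun ℝ).1 hx
  have key : g (∑ i, c i • w i) (∑ i, c i • w i) = ∑ i, c i * c i * g (w i) (w i) := by
    simp only [map_sum, LinearMap.sum_apply, map_smul, LinearMap.smul_apply, smul_eq_mul]
    refine Finset.sum_congr rfl fun i _ => ?_
    rw [Finset.sum_eq_single i]
    · ring
    · intro j _ hj
      simp [h0 j i hj]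
    · simp
  rw [key]
  have hex : ∃ i, c i ≠ 0 := by
    by_contra! h
    exact hne (by simp [h])
  obtain ⟨i, hi⟩ := hex
  refine Finset.sum_pos' (fun j _ => mul_nonneg (mul_self_nonneg _) (hp j).le) ⟨i, Finset.mem_univ _, ?_⟩
  exact mul_pos (mul_self_pos.2 hi) (hp i)

theorem aux_disj {V : Type*} [AddCommGroup V] [Module ℝ V] [FiniteDimensional ℝ V]
    (g : LinearMap.BilinForm ℝ V) (P N : Submodule ℝ V)
    (hP : ∀ x ∈ P, x ≠ 0 → 0 < g x x) (hN : ∀ x ∈ N, x ≠ 0 → g x x < 0) :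
    Module.finrank ℝ P + Module.finrank ℝ N ≤ Module.finrank ℝ V := by
  apply Submodule.finrank_add_finrank_le_of_disjoint
  rw [Submodule.disjoint_def]
  intro x hx hx'
  by_contra h
  exact lt_asymm (hP x hx h) (hN x hx' h)

theorem aux_sylvester {V : Type*} [AddCommGroup V] [Module ℝ V] [FiniteDimensional ℝ V]
    (g : LinearMap.BilinForm ℝ V)
    (hgsymm : ∀ x y : V, g x y = g y x)
    (hgnd : ∀ x : V, (∀ y : V, g x y = 0) → x = 0) :
    ∃ P N : Submodule ℝ V, (∀ x ∈ P, x ≠ 0 → 0 < g x x) ∧ (∀ x ∈ N, x ≠ 0 → g x x < 0) ∧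
      Module.finrank ℝ P + Module.finrank ℝ N = Module.finrank ℝ V := by
  classical
  obtain ⟨v, hv⟩ := LinearMap.BilinForm.exists_orthogonal_basis (B := g) ⟨hgsymm⟩
  have h0 : ∀ i j, i ≠ j → g (v i) (v j) = 0 := fun i j hij => hv hij
  have hne : ∀ i, g (v i) (v i) ≠ 0 := by
    intro i hi
    apply v.ne_zero i
    apply hgnd
    intro y
    have : g (v i) = 0 := by
      apply v.ext
      intro j
      by_cases hij : i = j
      · subst hij; simpa using hi
      · simpa using h0 i j hij
    simp [this]
  let s := {i // 0 < g (v i) (v i)}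
  let t := {i // ¬ 0 < g (v i) (v i)}
  refine ⟨Submodule.span ℝ (Set.range fun i : s => v i),
    Submodule.span ℝ (Set.range fun i : t => v i), ?_, ?_, ?_⟩
  · exact aux_span_pos g _ (fun i j hij => h0 _ _ (fun h => hij (Subtype.ext h))) (fun i => i.2)
  · intro x hx hx0
    have := aux_span_pos (-g) (fun i : t => v i)
      (fun i j hij => by simp [h0 _ _ (fun h => hij (Subtype.ext h))])
      (fun i => by
        have := lt_of_le_of_ne (not_lt.1 i.2) (hne i)
        simpa using this) x hx hx0
    simpa using this
  · have e1 := finrank_span_eq_card (v.linearIndependent.comp (fun i : s => i.1) Subtype.val_injective)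
    have e2 := finrank_span_eq_card (v.linearIndependent.comp (fun i : t => i.1) Subtype.val_injective)
    refine (congrArg₂ (· + ·) e1 e2).trans ?_
    have := Fintype.card_subtype_compl (fun i => 0 < g (v i) (v i))
    have h2 := Fintype.card_subtype_le (fun i => 0 < g (v i) (v i))
    rw [Fintype.card_fin] at this h2
    change Fintype.card {i // 0 < g (v i) (v i)} + Fintype.card {i // ¬ 0 < g (v i) (v i)} = _
    omega

/-- If `(φ, ξ, η)` is an almost paracontact structure on a real vector
space `V` of dimension `2n+1` and `g` is a nondegenerate symmetric bilinear form compatible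
with the structure (`g(φX, φY) = −g(X,Y) + η(X)η(Y)`), then `g` has signature `(n+1, n)`:
a maximal positive-definite subspace has dimension `n+1` and a maximal negative-definite
subspace has dimension `n`. -/
theorem signature_of_almost_paracontact_metric
    (n : ℕ) (V : Type*) [AddCommGroup V] [Module ℝ V] [FiniteDimensional ℝ V]
    (hdim : Module.finrank ℝ V = 2 * n + 1)
    (φ : V →ₗ[ℝ] V) (ξ : V) (η : V →ₗ[ℝ] ℝ)
    (hηξ : η ξ = 1)
    (hφφ : ∀ x : V, φ (φ x) = x - η x • ξ)
    (hDplus : Module.finrank ℝ (Module.End.eigenspace φ 1) = n)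
    (hDminus : Module.finrank ℝ (Module.End.eigenspace φ (-1)) = n)
    (g : LinearMap.BilinForm ℝ V)
    (hgsymm : ∀ x y : V, g x y = g y x)
    (hgnd : ∀ x : V, (∀ y : V, g x y = 0) → x = 0)
    (hcompat : ∀ x y : V, g (φ x) (φ y) = - g x y + η x * η y) :
    (∃ P : Submodule ℝ V, Module.finrank ℝ P = n + 1 ∧ ∀ x ∈ P, x ≠ 0 → 0 < g x x) ∧
    (∀ P : Submodule ℝ V, (∀ x ∈ P, x ≠ 0 → 0 < g x x) → Module.finrank ℝ P ≤ n + 1) ∧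
    (∃ N : Submodule ℝ V, Module.finrank ℝ N = n ∧ ∀ x ∈ N, x ≠ 0 → g x x < 0) ∧
    (∀ N : Submodule ℝ V, (∀ x ∈ N, x ≠ 0 → g x x < 0) → Module.finrank ℝ N ≤ n) := by
  have hηφ : ∀ x, η (φ x) = 0 := by
    have hξ : φ ξ = 0 := by
      have h1 : φ (φ ξ) = 0 := by simp [hφφ, hηξ]
      have h2 := hφφ (φ ξ)
      rw [h1, map_zero] at h2
      have h3 : φ ξ = η (φ ξ) • ξ := (sub_eq_zero.1 h2.symm)
      have h4 : η (φ ξ) * η (φ ξ) = 0 := by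
        have h5 : η (φ (φ ξ)) = 0 := by rw [h1, map_zero]
        rw [h3, map_smul, map_smul, smul_eq_mul] at h5
        simpa [hηξ] using h5
      rw [h3, mul_self_eq_zero.1 h4, zero_smul]
    intro x
    have h := hφφ (φ x)
    rw [hφφ x, map_sub, map_smul, hξ, smul_zero, sub_zero] at h
    have h' : η (φ x) • ξ = 0 := sub_eq_self.1 h.symm
    simpa [hηξ] using congrArg η h'
  have hξ : φ ξ = 0 := by
    have h1 : φ (φ ξ) = 0 := by simp [hφφ, hηξ]
    have h2 := hφφ (φ ξ)
    rw [h1, map_zero, hηφ, zero_smul, sub_zero] at h2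
    exact h2.symm
  have hgξ : ∀ x, g x ξ = η x := by
    intro x
    have := hcompat x ξ
    rw [hξ, map_zero, hηξ] at this
    linarith
  have hpos : ∀ P : Submodule ℝ V, (∀ x ∈ P, x ≠ 0 → 0 < g x x) →
      Module.finrank ℝ P ≤ n + 1 := by
    intro P hP
    let K := P ⊓ LinearMap.ker η
    have hK : Module.finrank ℝ P ≤ Module.finrank ℝ K + 1 := by
      have h1 := Submodule.finrank_sup_add_finrank_inf_eq P (LinearMap.ker η)
      have h2 := LinearMap.finrank_range_add_finrank_ker η
      have h3 := (LinearMap.range η).finrank_le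
      rw [Module.finrank_self] at h3
      have h4 := (P ⊔ LinearMap.ker η).finrank_le
      change _ ≤ Module.finrank ℝ ↥(P ⊓ LinearMap.ker η) + 1
      omega
    have hinj : Function.Injective (φ.domRestrict K) := by
      rw [← LinearMap.ker_eq_bot, LinearMap.ker_eq_bot']
      rintro ⟨x, hx⟩ h
      have h' : φ x = 0 := h
      have h2 := hφφ x
      have h3 : η x = 0 := hx.2
      rw [h', map_zero, h3, zero_smul, sub_zero] at h2
      exact Subtype.ext h2.symm
    have hr := LinearMap.finrank_range_of_inj hinj
    have := aux_disj g P (LinearMap.range (φ.domRestrict K)) hP (by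
      rintro _ ⟨⟨x, hx⟩, rfl⟩ hne
      have h3 : η x = 0 := hx.2
      have hx0 : x ≠ 0 := by
        rintro rfl
        exact hne (by simp)
      have h4 := hP x hx.1 hx0
      change g (φ x) (φ x) < 0
      rw [hcompat, h3]
      linarith)
    omega
  have hneg : ∀ N : Submodule ℝ V, (∀ x ∈ N, x ≠ 0 → g x x < 0) →
      Module.finrank ℝ N ≤ n := by
    intro N hN
    let f : (N × ℝ) →ₗ[ℝ] V := (φ.domRestrict N).coprod (LinearMap.toSpanSingleton ℝ V ξ)
    have hf : ∀ x : N, ∀ t : ℝ, f (x, t) = φ x + t • ξ := fun x t => by simp [f]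
    have hval : ∀ x : N, ∀ t : ℝ, g (f (x, t)) (f (x, t)) = - g x x + η x * η x + t * t := by
      intro x t
      have e1 : g ξ (φ x) = 0 := by rw [hgsymm, hgξ, hηφ]
      rw [hf]
      simp only [map_add, LinearMap.add_apply, map_smul, LinearMap.smul_apply, smul_eq_mul,
        hgξ, hηφ, hηξ, hcompat, e1]
      ring
    have hvp : ∀ p : N × ℝ, p ≠ 0 → 0 < g (f p) (f p) := by
      rintro ⟨x, t⟩ hp
      rw [hval]
      by_cases hx : x = 0
      · subst hx
        have ht : t ≠ 0 := by
          rintro rfl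
          exact hp rfl
        have := mul_self_pos.2 ht
        simpa using this
      · have := hN x x.2 (fun h => hx (Subtype.ext h))
        nlinarith [mul_self_nonneg (η x), mul_self_nonneg t]
    have hinj : Function.Injective f := by
      rw [← LinearMap.ker_eq_bot, LinearMap.ker_eq_bot']
      intro p h
      by_contra hp
      have := hvp p hp
      simp [h] at this
    have hr := LinearMap.finrank_range_of_inj hinj
    rw [Module.finrank_prod, Module.finrank_self] at hr
    have := aux_disj g (LinearMap.range f) N (by
      rintro _ ⟨p, rfl⟩ hne
      exact hvp p (by rintro rfl; exact hne (map_zero f))) hN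
    omega
  obtain ⟨P, N, hP, hN, hs⟩ := aux_sylvester g hgsymm hgnd
  have h1 := hpos P hP
  have h2 := hneg N hN
  exact ⟨⟨P, by omega, hP⟩, hpos, ⟨N, by omega, hN⟩, hneg⟩
end

section
/- Let (V, φ, ξ, η, g) be an almost paracontact metric vector space of dimension 2n+1 and let h be an endomorphism of V that is g-self-adjoint (g(hX, Y) = g(X, hY)), anticommutes with φ (h∘φ = −φ∘h), satisfies hξ = 0, and satisfies h∘h = (1+κ)·φ∘φ for a real constant κ with κ > −1. Set λ = √(1+κ). Then h is diagonalizable with eigenvalues 0, λ and −λ: the 0-eigenspace is ℝξ, the eigenspaces D_h(λ) and D_h(−λ) each have dimension n, the three eigenspaces are mutually g-orthogonal, φ maps D_h(λ) onto D_h(−λ) and D_h(−λ) onto D_h(λ), and D_h(±λ) = { X ± (1/λ)·hX : X ∈ D^± }, where D⁺ and D⁻ denote the eigenspaces of φ in ker η for the eigenvalues +1 and −1. -/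
theorem aux_eig {V : Type*} [AddCommGroup V] [Module ℝ V] [FiniteDimensional ℝ V]
    (φ : V →ₗ[ℝ] V) (ξ : V) (η : V →ₗ[ℝ] ℝ)
    (hφφ : ∀ x : V, φ (φ x) = x - η x • ξ)
    (hηφ : ∀ x, η (φ x) = 0)
    (h : V →ₗ[ℝ] V)
    (hanti : ∀ x : V, h (φ x) = - φ (h x))
    (hηh : ∀ x, η (h x) = 0)
    (l s : ℝ) (hl : l ≠ 0) (hs : s * s = 1)
    (hh : ∀ x : V, h (h x) = (l * l) • φ (φ x)) :
    Submodule.map (LinearMap.id + l⁻¹ • h) (Module.End.eigenspace φ s)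
      = Module.End.eigenspace h l ∧
    Module.finrank ℝ (Module.End.eigenspace h l)
      = Module.finrank ℝ (Module.End.eigenspace φ s) := by
  have hs0 : s ≠ 0 := by rintro rfl; simp at hs
  have key : Submodule.map (LinearMap.id + l⁻¹ • h) (Module.End.eigenspace φ s)
      = Module.End.eigenspace h l := by
    ext y
    simp only [Submodule.mem_map, Module.End.mem_eigenspace_iff, LinearMap.add_apply,
      LinearMap.id_apply, LinearMap.smul_apply]
    constructor
    · rintro ⟨x, hx, rfl⟩
      have e : h (h x) = (l * l) • x := by
        rw [hh, hx, map_smul, hx, smul_smul s s, hs, one_smul]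
      rw [map_add, map_smul, e]
      match_scalars <;> field_simp
    · intro hy
      have hηy : η y = 0 := by
        have := hηh y
        rw [hy, map_smul, smul_eq_mul] at this
        exact (mul_eq_zero.mp this).resolve_left hl
      refine ⟨(1/2 : ℝ) • (y + s • φ y), ?_, ?_⟩
      · simp only [map_smul, map_add, hφφ, hηy]
        match_scalars <;> first | ring1 | linear_combination (-1/2) * hs | linear_combination (1/2) * hs
      · simp only [map_smul, map_add, hanti, hy]
        match_scalars <;> field_simp <;> ring
  refine ⟨key, ?_⟩
  rw [← key, ← LinearMap.range_domRestrict]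
  apply LinearMap.finrank_range_of_inj
  rw [injective_iff_map_eq_zero]
  rintro ⟨x, hx⟩ h0
  rw [Module.End.mem_eigenspace_iff] at hx
  simp only [LinearMap.domRestrict_apply, LinearMap.add_apply,
      LinearMap.id_apply, LinearMap.smul_apply] at h0
  have h1 := congrArg φ h0
  have h2 : φ (h x) = - (s • h x) := by
    rw [← map_smul, ← hx, hanti, neg_neg]
  simp only [map_add, map_smul, h2, hx, map_zero] at h1
  have h3 : (2 * s) • x = 0 := by
    have : (2 * s) • x = s • (x + l⁻¹ • h x) + (s • x + l⁻¹ • -(s • h x)) := by module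
    rw [this, h0, h1]; simp
  have h4 : x = 0 := (smul_eq_zero.mp h3).resolve_left (by simpa using hs0)
  simpa using h4

theorem aux_orth {V : Type*} [AddCommGroup V] [Module ℝ V]
    (g : LinearMap.BilinForm ℝ V) (h : V →ₗ[ℝ] V)
    (hsa : ∀ x y : V, g (h x) y = g x (h y)) (a b : ℝ) (hab : a ≠ b) :
    ∀ x ∈ Module.End.eigenspace h a, ∀ y ∈ Module.End.eigenspace h b, g x y = 0 := by
  intro x hx y hy
  rw [Module.End.mem_eigenspace_iff] at hx hy
  have := hsa x y
  simp only [hx, hy, map_smul, LinearMap.smul_apply, smul_eq_mul] at this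
  have h2 : (a - b) * g x y = 0 := by linear_combination this
  exact (mul_eq_zero.mp h2).resolve_left (sub_ne_zero.mpr hab)

theorem aux_swap {V : Type*} [AddCommGroup V] [Module ℝ V]
    (φ : V →ₗ[ℝ] V) (ξ : V) (η : V →ₗ[ℝ] ℝ)
    (hφφ : ∀ x : V, φ (φ x) = x - η x • ξ)
    (h : V →ₗ[ℝ] V)
    (hanti : ∀ x : V, h (φ x) = - φ (h x))
    (hηh : ∀ x, η (h x) = 0)
    (l m : ℝ) (hl : l ≠ 0) (hm : m = -l) :
    Submodule.map φ (Module.End.eigenspace h l) = Module.End.eigenspace h m := by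
  subst hm
  ext y
  simp only [Submodule.mem_map, Module.End.mem_eigenspace_iff]
  constructor
  · rintro ⟨x, hx, rfl⟩
    rw [hanti, hx, map_smul, neg_smul]
  · intro hy
    have hηy : η y = 0 := by
      have := hηh y
      rw [hy, map_smul, smul_eq_mul] at this
      exact (mul_eq_zero.mp this).resolve_left (neg_ne_zero.mpr hl)
    refine ⟨φ y, ?_, ?_⟩
    · rw [hanti, hy, map_smul, neg_smul, neg_neg]
    · rw [hφφ, hηy]; simp

/-- On an almost paracontact metric vector space, a `g`-self-adjoint
endomorphism `h` anticommuting with `φ`, killing `ξ` and satisfying `h² = (1+κ)φ²` for a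
constant `κ > −1` is diagonalizable with eigenvalues `0, λ, −λ` (`λ = √(1+κ)`): the
`0`-eigenspace is `ℝξ`, the `±λ`-eigenspaces have dimension `n`, the eigenspaces are
mutually `g`-orthogonal, `φ` interchanges the `±λ`-eigenspaces, and
`D_h(±λ) = {X ± (1/λ)hX : X ∈ D^±}`. -/
theorem h_diagonalizable_kappa_gt_neg_one
    (n : ℕ) (V : Type*) [AddCommGroup V] [Module ℝ V] [FiniteDimensional ℝ V]
    (hdim : Module.finrank ℝ V = 2 * n + 1)
    (φ : V →ₗ[ℝ] V) (ξ : V) (η : V →ₗ[ℝ] ℝ)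
    (hηξ : η ξ = 1)
    (hφφ : ∀ x : V, φ (φ x) = x - η x • ξ)
    (hDplus : Module.finrank ℝ (Module.End.eigenspace φ 1) = n)
    (hDminus : Module.finrank ℝ (Module.End.eigenspace φ (-1)) = n)
    (g : LinearMap.BilinForm ℝ V)
    (hgsymm : ∀ x y : V, g x y = g y x)
    (hgnd : ∀ x : V, (∀ y : V, g x y = 0) → x = 0)
    (hcompat : ∀ x y : V, g (φ x) (φ y) = - g x y + η x * η y)
    (h : V →ₗ[ℝ] V)
    (hsa : ∀ x y : V, g (h x) y = g x (h y))
    (hanti : ∀ x : V, h (φ x) = - φ (h x))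
    (hhξ : h ξ = 0)
    (κ : ℝ) (hκ : -1 < κ)
    (hh : ∀ x : V, h (h x) = (1 + κ) • φ (φ x))
    (lam : ℝ) (hlam : lam = Real.sqrt (1 + κ)) :
    Module.End.eigenspace h 0 = Submodule.span ℝ {ξ} ∧
    Module.finrank ℝ (Module.End.eigenspace h lam) = n ∧
    Module.finrank ℝ (Module.End.eigenspace h (-lam)) = n ∧
    (∀ x ∈ Module.End.eigenspace h 0, ∀ y ∈ Module.End.eigenspace h lam, g x y = 0) ∧
    (∀ x ∈ Module.End.eigenspace h 0, ∀ y ∈ Module.End.eigenspace h (-lam), g x y = 0) ∧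
    (∀ x ∈ Module.End.eigenspace h lam, ∀ y ∈ Module.End.eigenspace h (-lam), g x y = 0) ∧
    Module.End.eigenspace h 0 ⊔ Module.End.eigenspace h lam ⊔ Module.End.eigenspace h (-lam)
      = ⊤ ∧
    Submodule.map φ (Module.End.eigenspace h lam) = Module.End.eigenspace h (-lam) ∧
    Submodule.map φ (Module.End.eigenspace h (-lam)) = Module.End.eigenspace h lam ∧
    (Module.End.eigenspace h lam : Set V)
      = (fun x => x + lam⁻¹ • h x) '' (Module.End.eigenspace φ 1 : Set V) ∧
    (Module.End.eigenspace h (-lam) : Set V)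
      = (fun x => x - lam⁻¹ • h x) '' (Module.End.eigenspace φ (-1) : Set V) := by
  have hξ0 : ξ ≠ 0 := by rintro rfl; simp at hηξ
  have hφφξ : φ (φ ξ) = 0 := by rw [hφφ, hηξ]; simp
  have hφξ : φ ξ = 0 := by
    have h1 := hφφ (φ ξ)
    rw [hφφξ, map_zero] at h1
    have h2 : φ ξ = η (φ ξ) • ξ := (sub_eq_zero.mp h1.symm)
    have h3 := hφφξ
    rw [h2, map_smul, h2, smul_smul] at h3
    have h4 := (smul_eq_zero.mp h3).resolve_right hξ0
    simp only [map_smul, hηξ, smul_eq_mul, mul_one] at h4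
    rw [h2, mul_self_eq_zero.mp h4, zero_smul]
  have hηφ : ∀ x, η (φ x) = 0 := by
    intro x
    have h1 := hφφ (φ x)
    rw [hφφ x, map_sub, map_smul, hφξ, smul_zero] at h1
    exact (smul_eq_zero.mp (sub_right_injective h1).symm).resolve_right hξ0
  have hpos : 0 < 1 + κ := by linarith
  have hlp : 0 < lam := hlam ▸ Real.sqrt_pos.mpr hpos
  have hll : lam * lam = 1 + κ := by rw [hlam]; exact Real.mul_self_sqrt hpos.le
  have hl := hlp.ne'
  have hηh : ∀ x, η (h x) = 0 := by
    intro x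
    have h1 := hh (h x)
    rw [hh x, hφφ x, hφφ (h x), map_smul, map_sub, map_smul, hhξ, smul_zero] at h1
    have h2 := smul_right_injective V hpos.ne' h1
    exact (smul_eq_zero.mp (sub_right_injective h2).symm).resolve_right hξ0
  obtain ⟨k1, d1⟩ := aux_eig φ ξ η hφφ hηφ h hanti hηh lam 1 hl (by norm_num)
    (by rw [hll]; exact hh)
  obtain ⟨k2, d2⟩ := aux_eig φ ξ η hφφ hηφ h hanti hηh (-lam) (-1) (neg_ne_zero.mpr hl)
    (by norm_num) (by rw [neg_mul_neg, hll]; exact hh)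
  have hz : Module.End.eigenspace h 0 = Submodule.span ℝ {ξ} := by
    ext x
    rw [Module.End.mem_eigenspace_iff, Submodule.mem_span_singleton, zero_smul]
    constructor
    · intro hx
      have h1 := hh x
      rw [hx, map_zero] at h1
      have h2 := (smul_eq_zero.mp h1.symm).resolve_left hpos.ne'
      rw [hφφ] at h2
      exact ⟨η x, (sub_eq_zero.mp h2).symm⟩
    · rintro ⟨a, rfl⟩
      rw [map_smul, hhξ, smul_zero]
  refine ⟨hz, d1.trans hDplus, d2.trans hDminus, aux_orth g h hsa _ _ hl.symm,
    aux_orth g h hsa _ _ (by linarith), aux_orth g h hsa _ _ (by linarith), ?_,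
    aux_swap φ ξ η hφφ h hanti hηh _ _ hl rfl,
    aux_swap φ ξ η hφφ h hanti hηh _ _ (neg_ne_zero.mpr hl) (neg_neg _).symm, ?_, ?_⟩
  · rw [eq_top_iff]
    rintro x -
    have e : x = η x • ξ + (1/2 : ℝ) • (x - η x • ξ + lam⁻¹ • h x)
        + (1/2 : ℝ) • (x - η x • ξ - lam⁻¹ • h x) := by module
    rw [e]
    refine Submodule.add_mem_sup (Submodule.add_mem_sup ?_ ?_) ?_
    · rw [hz]; exact Submodule.smul_mem _ _ (Submodule.mem_span_singleton_self ξ)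
    · apply Submodule.smul_mem
      rw [Module.End.mem_eigenspace_iff]
      simp only [map_add, map_sub, map_smul, hh, hφφ, hhξ, ← hll]
      match_scalars <;> field_simp
    · apply Submodule.smul_mem
      rw [Module.End.mem_eigenspace_iff]
      simp only [map_add, map_sub, map_smul, hh, hφφ, hhξ, ← hll]
      match_scalars <;> field_simp
  · rw [← k1, Submodule.map_coe]
    rfl
  · rw [← k2, Submodule.map_coe]
    refine Set.image_congr fun x _ => ?_
    simp [inv_neg, sub_eq_add_neg]
end

section
/- Let (V, φ, ξ, η, g) be an almost paracontact metric vector space of dimension 2n+1 with φ g-skew-adjoint (g(φX, Y) = −g(X, φY)), and let h be an endomorphism of V that is g-self-adjoint, anticommutes with φ, satisfies hξ = 0, and satisfies h∘h = (1+κ)·φ∘φ for a real constant κ with κ < −1. Set λ = √(−1−κ). Then the operator φ∘h is g-self-adjoint, anticommutes with φ, satisfies (φ∘h)∘(φ∘h) = −(1+κ)·φ∘φ, and is diagonalizable with eigenvalues 0, λ and −λ: its 0-eigenspace is ℝξ, the eigenspaces D_{φh}(λ) and D_{φh}(−λ) each have dimension n, the three eigenspaces are mutually g-orthogonal, φ interchanges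 D_{φh}(λ) and D_{φh}(−λ), and D_{φh}(±λ) = { X ± (1/λ)·(φ∘h)X : X ∈ D^± }, where D⁺ and D⁻ denote the eigenspaces of φ in ker η for the eigenvalues +1 and −1. -/
/-- On an almost paracontact metric vector space with `φ` `g`-skew-adjoint,
if `h` is `g`-self-adjoint, anticommutes with `φ`, kills `ξ` and satisfies `h² = (1+κ)φ²`
with `κ < −1`, then `φ∘h` is `g`-self-adjoint, anticommutes with `φ`, satisfies
`(φh)² = −(1+κ)φ²`, and is diagonalizable with eigenvalues `0, λ, −λ` (`λ = √(−1−κ)`), with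
`0`-eigenspace `ℝξ`, `±λ`-eigenspaces of dimension `n`, mutually `g`-orthogonal eigenspaces,
`φ` interchanging the `±λ`-eigenspaces, and `D_{φh}(±λ) = {X ± (1/λ)(φh)X : X ∈ D^±}`. -/
theorem phi_h_diagonalizable_kappa_lt_neg_one
    (n : ℕ) (V : Type*) [AddCommGroup V] [Module ℝ V] [FiniteDimensional ℝ V]
    (hdim : Module.finrank ℝ V = 2 * n + 1)
    (φ : V →ₗ[ℝ] V) (ξ : V) (η : V →ₗ[ℝ] ℝ)
    (hηξ : η ξ = 1)
    (hφφ : ∀ x : V, φ (φ x) = x - η x • ξ)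
    (hDplus : Module.finrank ℝ (Module.End.eigenspace φ 1) = n)
    (hDminus : Module.finrank ℝ (Module.End.eigenspace φ (-1)) = n)
    (g : LinearMap.BilinForm ℝ V)
    (hgsymm : ∀ x y : V, g x y = g y x)
    (hgnd : ∀ x : V, (∀ y : V, g x y = 0) → x = 0)
    (hcompat : ∀ x y : V, g (φ x) (φ y) = - g x y + η x * η y)
    (hskew : ∀ x y : V, g (φ x) y = - g x (φ y))
    (h : V →ₗ[ℝ] V)
    (hsa : ∀ x y : V, g (h x) y = g x (h y))
    (hanti : ∀ x : V, h (φ x) = - φ (h x))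
    (hhξ : h ξ = 0)
    (κ : ℝ) (hκ : κ < -1)
    (hh : ∀ x : V, h (h x) = (1 + κ) • φ (φ x))
    (lam : ℝ) (hlam : lam = Real.sqrt (-1 - κ)) :
    (∀ x y : V, g (φ (h x)) y = g x (φ (h y))) ∧
    (∀ x : V, φ (h (φ x)) = - φ (φ (h x))) ∧
    (∀ x : V, φ (h (φ (h x))) = (-(1 + κ)) • φ (φ x)) ∧
    Module.End.eigenspace (φ ∘ₗ h) 0 = Submodule.span ℝ {ξ} ∧
    Module.finrank ℝ (Module.End.eigenspace (φ ∘ₗ h) lam) = n ∧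
    Module.finrank ℝ (Module.End.eigenspace (φ ∘ₗ h) (-lam)) = n ∧
    (∀ x ∈ Module.End.eigenspace (φ ∘ₗ h) 0,
      ∀ y ∈ Module.End.eigenspace (φ ∘ₗ h) lam, g x y = 0) ∧
    (∀ x ∈ Module.End.eigenspace (φ ∘ₗ h) 0,
      ∀ y ∈ Module.End.eigenspace (φ ∘ₗ h) (-lam), g x y = 0) ∧
    (∀ x ∈ Module.End.eigenspace (φ ∘ₗ h) lam,
      ∀ y ∈ Module.End.eigenspace (φ ∘ₗ h) (-lam), g x y = 0) ∧
    Module.End.eigenspace (φ ∘ₗ h) 0 ⊔ Module.End.eigenspace (φ ∘ₗ h) lam ⊔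
      Module.End.eigenspace (φ ∘ₗ h) (-lam) = ⊤ ∧
    Submodule.map φ (Module.End.eigenspace (φ ∘ₗ h) lam)
      = Module.End.eigenspace (φ ∘ₗ h) (-lam) ∧
    Submodule.map φ (Module.End.eigenspace (φ ∘ₗ h) (-lam))
      = Module.End.eigenspace (φ ∘ₗ h) lam ∧
    (Module.End.eigenspace (φ ∘ₗ h) lam : Set V)
      = (fun x => x + lam⁻¹ • φ (h x)) '' (Module.End.eigenspace φ 1 : Set V) ∧
    (Module.End.eigenspace (φ ∘ₗ h) (-lam) : Set V)
      = (fun x => x - lam⁻¹ • φ (h x)) '' (Module.End.eigenspace φ (-1) : Set V) := by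
  have hξ0 : ξ ≠ 0 := by
    rintro rfl
    simp at hηξ
  have hφξ : φ ξ = 0 := by
    have h1 : φ (φ ξ) = 0 := by rw [hφφ, hηξ]; simp
    have h2 := hφφ (φ ξ)
    rw [h1, map_zero] at h2
    have h3 : φ ξ = η (φ ξ) • ξ := (sub_eq_zero.mp h2.symm)
    have h4 : η (φ ξ) * η (φ ξ) = 0 := by
      have h5 : φ (φ ξ) = (η (φ ξ) * η (φ ξ)) • ξ := by
        generalize η (φ ξ) = c at h3
        rw [h3, map_smul, h3, smul_smul]
      rw [h1] at h5
      rcases smul_eq_zero.mp h5.symm with h6 | h6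
      · exact h6
      · exact absurd h6 hξ0
    rw [h3, mul_self_eq_zero.mp h4, zero_smul]
  have hηg : ∀ x, η x = g x ξ := by
    intro x
    have := hcompat x ξ
    rw [hφξ, hηξ, map_zero] at this
    linarith
  have hηφ : ∀ x, η (φ x) = 0 := by
    intro x
    rw [hηg, hskew, hφξ, map_zero, neg_zero]
  have hηh : ∀ x, η (h x) = 0 := by
    intro x
    rw [hηg, hsa, hhξ, map_zero]
  have hl0 : 0 < lam := by rw [hlam]; exact Real.sqrt_pos.mpr (by linarith)
  have hl2 : lam * lam = -(1 + κ) := by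
    rw [hlam, Real.mul_self_sqrt (by linarith)]; ring
  have hlne : lam ≠ 0 := hl0.ne'
  have c1 : ∀ x y : V, g (φ (h x)) y = g x (φ (h y)) := by
    intro x y
    rw [hskew, hsa, hanti, map_neg, neg_neg]
  have c2 : ∀ x : V, φ (h (φ x)) = - φ (φ (h x)) := by
    intro x
    rw [hanti, map_neg]
  have c3 : ∀ x : V, φ (h (φ (h x))) = (-(1 + κ)) • φ (φ x) := by
    intro x
    rw [hanti, map_neg, hh, map_smul, map_smul, neg_smul, hφφ (φ (φ x)), hηφ, zero_smul, sub_zero]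
  obtain ⟨A, hA⟩ : ∃ A : V →ₗ[ℝ] V, A = φ ∘ₗ h := ⟨_, rfl⟩
  have hAx : ∀ x, φ (h x) = A x := fun x => by rw [hA]; rfl
  rw [← hA]
  refine ⟨c1, c2, c3, ?_⟩
  simp only [hAx] at c1 c2 c3 ⊢
  have hAη : ∀ x, η (A x) = 0 := fun x => by rw [← hAx, hηφ]
  have hAξ : A ξ = 0 := by rw [← hAx, hhξ, map_zero]
  have hAA : ∀ x, A (A x) = (lam * lam) • (x - η x • ξ) := by
    intro x; rw [c3, hl2, hφφ]
  have hη0 : ∀ μ : ℝ, μ ≠ 0 → ∀ x, A x = μ • x → η x = 0 := by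
    intro μ hμ x hx
    have := hAη x
    rw [hx, map_smul, smul_eq_mul] at this
    exact (mul_eq_zero.mp this).resolve_left hμ
  have horth : ∀ μ ν : ℝ, μ ≠ ν → ∀ x ∈ Module.End.eigenspace A μ,
      ∀ y ∈ Module.End.eigenspace A ν, g x y = 0 := by
    intro μ ν hne x hx y hy
    rw [Module.End.mem_eigenspace_iff] at hx hy
    have := c1 x y
    rw [hx, hy] at this
    simp only [map_smul, LinearMap.smul_apply, smul_eq_mul] at this
    have h2 : (μ - ν) * g x y = 0 := by linarith
    exact (mul_eq_zero.mp h2).resolve_left (sub_ne_zero.mpr hne)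
  have hzero : Module.End.eigenspace A 0 = Submodule.span ℝ {ξ} := by
    ext x
    rw [Module.End.mem_eigenspace_iff, Submodule.mem_span_singleton, zero_smul]
    constructor
    · intro hx
      have := hAA x
      rw [hx, map_zero] at this
      have h2 := (smul_eq_zero.mp this.symm).resolve_left (mul_ne_zero hlne hlne)
      exact ⟨η x, (sub_eq_zero.mp h2).symm⟩
    · rintro ⟨a, rfl⟩
      rw [map_smul, hAξ, smul_zero]
  have hmaple : ∀ μ : ℝ, ∀ x, A x = μ • x → A (φ x) = (-μ) • φ x := by
    intro μ x hx
    rw [c2, hx, map_smul, neg_smul]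
  have hmap : ∀ μ : ℝ, μ ≠ 0 → Submodule.map φ (Module.End.eigenspace A μ)
      = Module.End.eigenspace A (-μ) := by
    intro μ hμ
    ext y
    simp only [Submodule.mem_map, Module.End.mem_eigenspace_iff]
    constructor
    · rintro ⟨x, hx, rfl⟩
      exact hmaple μ x hx
    · intro hy
      refine ⟨φ y, ?_, ?_⟩
      · simpa using hmaple _ y hy
      · rw [hφφ, hη0 (-μ) (neg_ne_zero.mpr hμ) y hy, zero_smul, sub_zero]
  have himg : ∀ e μ : ℝ, e * e = 1 → μ * μ = lam * lam → Module.End.eigenspace A μ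
      = Submodule.map (LinearMap.id + μ⁻¹ • A) (Module.End.eigenspace φ e) := by
    intro e μ he hμ
    have hμ0 : μ ≠ 0 := by
      rintro rfl
      have := mul_ne_zero hlne hlne
      simp at hμ
      exact hlne hμ
    have he0 : e ≠ 0 := by
      rintro rfl
      simp at he
    ext y
    simp only [Submodule.mem_map, Module.End.mem_eigenspace_iff, LinearMap.add_apply,
      LinearMap.id_apply, LinearMap.smul_apply]
    constructor
    · intro hy
      have hηy := hη0 μ hμ0 y hy
      have hφy : φ (φ y) = y := by rw [hφφ, hηy, zero_smul, sub_zero]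
      have hAφ := hmaple μ y hy
      refine ⟨(1 / 2 : ℝ) • (y + e • φ y), ?_, ?_⟩
      · simp only [map_smul, map_add, hφy]
        have : e • (1 / 2 : ℝ) • (y + e • φ y) = (1 / 2 : ℝ) • (e • y + (e * e) • φ y) := by
          module
        rw [this, he, one_smul, add_comm]
      · simp only [map_smul, map_add, hy, hAφ]
        match_scalars <;> field_simp <;> ring
    · rintro ⟨x, hx, rfl⟩
      have hηx : η x = 0 := by
        have := hηφ x
        rw [hx, map_smul, smul_eq_mul] at this
        exact (mul_eq_zero.mp this).resolve_left he0
      simp only [map_smul, map_add, hAA, hηx, zero_smul, sub_zero, ← hμ]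
      match_scalars <;> field_simp
  have i1 := himg 1 lam (by norm_num) rfl
  have i2 := himg (-1) (-lam) (by norm_num) (by ring)
  have htop : Module.End.eigenspace A 0 ⊔ Module.End.eigenspace A lam ⊔
      Module.End.eigenspace A (-lam) = ⊤ := by
    rw [eq_top_iff]
    intro x _
    have hx : x = (η x • ξ + (1 / 2 : ℝ) • ((x - η x • ξ) + lam⁻¹ • A x))
        + (1 / 2 : ℝ) • ((x - η x • ξ) - lam⁻¹ • A x) := by module
    rw [hx]
    refine Submodule.add_mem_sup (Submodule.add_mem_sup ?_ ?_) ?_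
    · rw [hzero]
      exact Submodule.smul_mem _ _ (Submodule.mem_span_singleton_self ξ)
    · rw [Module.End.mem_eigenspace_iff]
      simp only [map_smul, map_add, map_sub, hAA, hAξ]
      match_scalars <;> field_simp
    · rw [Module.End.mem_eigenspace_iff]
      simp only [map_smul, map_add, map_sub, hAA, hAξ]
      match_scalars <;> field_simp
  have d1 : Module.finrank ℝ (Module.End.eigenspace A lam) ≤ n := by
    rw [i1]
    exact (Submodule.finrank_map_le _ _).trans hDplus.le
  have d2 : Module.finrank ℝ (Module.End.eigenspace A (-lam)) ≤ n := by
    rw [i2]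
    exact (Submodule.finrank_map_le _ _).trans hDminus.le
  have d0 : Module.finrank ℝ (Module.End.eigenspace A 0) = 1 := by
    rw [hzero]
    exact finrank_span_singleton hξ0
  have d3 := Submodule.finrank_add_le_finrank_add_finrank
    (Module.End.eigenspace A 0 ⊔ Module.End.eigenspace A lam) (Module.End.eigenspace A (-lam))
  have d4 := Submodule.finrank_add_le_finrank_add_finrank
    (Module.End.eigenspace A 0) (Module.End.eigenspace A lam)
  rw [htop, finrank_top, hdim] at d3
  refine ⟨hzero, by omega, by omega, horth _ _ hlne.symm, horth _ _ (by linarith),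
    horth _ _ (by linarith), htop, hmap lam hlne, ?_, ?_, ?_⟩
  · simpa using hmap (-lam) (neg_ne_zero.mpr hlne)
  · rw [i1]
    rfl
  · rw [i2, Submodule.map_coe]
    apply Set.image_congr
    intro x _
    simp [inv_neg, sub_eq_add_neg]
end

section
/- Let (V, φ, ξ, η, g) be an almost paracontact metric vector space of dimension 2n+1 and let h be an endomorphism of V that is g-self-adjoint, anticommutes with φ, satisfies hξ = 0, and satisfies h∘h = (1+κ)·φ∘φ for a real constant κ > −1; set λ = √(1+κ). Then there exists a basis {X₁, …, Xₙ, Y₁, …, Yₙ, ξ} of V consisting of eigenvectors of h with hXᵢ = λXᵢ and Yᵢ = φXᵢ (so hYᵢ = −λYᵢ), such that the basis is g-orthogonal, g(ξ, ξ) = 1, and for each i one has g(Xᵢ, Xᵢ) = −g(Yᵢ, Yᵢ) = εᵢ with εᵢ ∈ {+1, −1}. -/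
/-- On an almost paracontact metric vector space with a `g`-self-adjoint
`h` anticommuting with `φ`, `hξ = 0` and `h² = (1+κ)φ²` for `κ > −1` (`λ = √(1+κ)`), there
is a basis `{X₁,…,Xₙ, Y₁,…,Yₙ, ξ}` of eigenvectors of `h` with `hXᵢ = λXᵢ`, `Yᵢ = φXᵢ`
(hence `hYᵢ = −λYᵢ`), the basis is `g`-orthogonal, `g(ξ,ξ) = 1`, and
`g(Xᵢ,Xᵢ) = −g(Yᵢ,Yᵢ) = εᵢ ∈ {±1}`. -/
theorem exists_orthogonal_eigenbasis_of_h
    (n : ℕ) (V : Type*) [AddCommGroup V] [Module ℝ V] [FiniteDimensional ℝ V]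
    (hdim : Module.finrank ℝ V = 2 * n + 1)
    (φ : V →ₗ[ℝ] V) (ξ : V) (η : V →ₗ[ℝ] ℝ)
    (hηξ : η ξ = 1)
    (hφφ : ∀ x : V, φ (φ x) = x - η x • ξ)
    (hDplus : Module.finrank ℝ (Module.End.eigenspace φ 1) = n)
    (hDminus : Module.finrank ℝ (Module.End.eigenspace φ (-1)) = n)
    (g : LinearMap.BilinForm ℝ V)
    (hgsymm : ∀ x y : V, g x y = g y x)
    (hgnd : ∀ x : V, (∀ y : V, g x y = 0) → x = 0)
    (hcompat : ∀ x y : V, g (φ x) (φ y) = - g x y + η x * η y)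
    (h : V →ₗ[ℝ] V)
    (hsa : ∀ x y : V, g (h x) y = g x (h y))
    (hanti : ∀ x : V, h (φ x) = - φ (h x))
    (hhξ : h ξ = 0)
    (κ : ℝ) (hκ : -1 < κ)
    (hh : ∀ x : V, h (h x) = (1 + κ) • φ (φ x))
    (lam : ℝ) (hlam : lam = Real.sqrt (1 + κ)) :
    ∃ (X Y : Fin n → V) (ε : Fin n → ℝ),
      (∀ i, h (X i) = lam • X i) ∧
      (∀ i, Y i = φ (X i)) ∧
      (∀ i, h (Y i) = -lam • Y i) ∧
      LinearIndependent ℝ (Sum.elim X (Sum.elim Y (fun _ : Unit => ξ))) ∧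
      Submodule.span ℝ (Set.range (Sum.elim X (Sum.elim Y (fun _ : Unit => ξ)))) = ⊤ ∧
      (∀ i j, i ≠ j → g (X i) (X j) = 0) ∧
      (∀ i j, i ≠ j → g (Y i) (Y j) = 0) ∧
      (∀ i j, g (X i) (Y j) = 0) ∧
      (∀ i, g (X i) ξ = 0) ∧
      (∀ i, g (Y i) ξ = 0) ∧
      g ξ ξ = 1 ∧
      (∀ i, ε i = 1 ∨ ε i = -1) ∧
      (∀ i, g (X i) (X i) = ε i) ∧
      (∀ i, g (Y i) (Y i) = -ε i) := by
  have hl0 : 0 < lam := by rw [hlam]; exact Real.sqrt_pos.mpr (by linarith)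
  have hl2 : 1 + κ = lam * lam := by rw [hlam]; exact (Real.mul_self_sqrt (by linarith)).symm
  have hξ0 : ξ ≠ 0 := by rintro rfl; simp at hηξ
  have hφξ : φ ξ = 0 := by
    have h1 : φ (φ ξ) = 0 := by rw [hφφ, hηξ]; simp
    have h2 := hφφ (φ ξ)
    rw [h1, map_zero] at h2
    have h3 : φ ξ = η (φ ξ) • ξ := (sub_eq_zero.mp h2.symm)
    have h4 : η (φ ξ) = 0 := by
      have h5 : φ (φ ξ) = (η (φ ξ) * η (φ ξ)) • ξ := by
        conv_lhs => rw [h3, map_smul, h3]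
        rw [smul_smul]
        simp [hηξ]
      rw [h1] at h5
      rcases smul_eq_zero.mp h5.symm with h6 | h6
      · exact mul_self_eq_zero.mp h6
      · exact absurd h6 hξ0
    rw [h3, h4, zero_smul]
  have hηφ : ∀ x, η (φ x) = 0 := by
    intro x
    have h1 := hφφ (φ x)
    rw [hφφ x, map_sub, map_smul, hφξ, smul_zero, sub_zero] at h1
    have h2 : η (φ x) • ξ = 0 := sub_eq_self.mp h1.symm
    exact (smul_eq_zero.mp h2).resolve_right hξ0
  have hgξ : ∀ x, g x ξ = η x := by
    intro x
    have := hcompat x ξ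
    rw [hφξ, map_zero, hηξ] at this
    linarith
  have hηh : ∀ x, η (h x) = 0 := by
    intro x
    rw [← hgξ, hsa, hhξ, map_zero]
  set E := Module.End.eigenspace h lam with hE
  have hEη : ∀ x, h x = lam • x → η x = 0 := by
    intro x hx
    have := hηh x
    rw [hx, map_smul, smul_eq_mul] at this
    exact (mul_eq_zero.mp this).resolve_left hl0.ne'
  have hEφ : ∀ x, h x = lam • x → h (φ x) = -lam • φ x := by
    intro x hx
    rw [hanti, hx, map_smul, neg_smul]
  have hgXY : ∀ x y, h x = lam • x → h y = lam • y → g x (φ y) = 0 := by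
    intro x y hx hy
    have := hsa x (φ y)
    rw [hx, hEφ y hy] at this
    simp only [map_smul, LinearMap.smul_apply, smul_eq_mul] at this
    have h2 : lam * g x (φ y) = 0 := by linarith
    exact (mul_eq_zero.mp h2).resolve_left hl0.ne'
  have hdec : ∀ z, ∃ e ∈ E, ∃ f ∈ E, ∃ c : ℝ, z = e + φ f + c • ξ := by
    intro z
    have hz : h (h z) = (lam * lam) • (z - η z • ξ) := by rw [hh, hφφ, hl2]
    refine ⟨(1/2 : ℝ) • (z - η z • ξ) + (1 / (2 * lam)) • h z, ?_,
      φ ((1/2 : ℝ) • (z - η z • ξ) - (1 / (2 * lam)) • h z), ?_, η z, ?_⟩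
    · rw [hE, Module.End.mem_eigenspace_iff]
      simp only [map_add, map_sub, map_smul, hz, hhξ, smul_zero, sub_zero]
      match_scalars <;> field_simp
    · rw [hE, Module.End.mem_eigenspace_iff, hanti]
      simp only [map_sub, map_smul, hz, hhξ, hφξ, smul_zero, sub_zero]
      match_scalars <;> field_simp
    · rw [hφφ]
      simp only [map_sub, map_smul, hηξ, hηh, smul_eq_mul]
      match_scalars <;> field_simp <;> ring
  have hEmem : ∀ x : E, h x = lam • (x : V) := fun x => Module.End.mem_eigenspace_iff.mp x.2
  have hEnd : ∀ x : E, (∀ y : E, g x y = 0) → x = 0 := by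
    intro x hx
    apply Subtype.ext
    apply hgnd
    intro z
    obtain ⟨e, he, f, hf, c, rfl⟩ := hdec z
    have h1 := hx ⟨e, he⟩
    have h2 := hgXY x f (hEmem x) (hEmem ⟨f, hf⟩)
    simp only at h1
    rw [map_add, map_add, map_smul, h1, h2, hgξ, hEη _ (hEmem x)]
    simp
  let B : LinearMap.BilinForm ℝ E := g.restrict E
  have hBs : LinearMap.IsSymm B := ⟨fun x y => by
    simpa [B] using hgsymm x y⟩
  haveI : Invertible (2 : ℝ) := invertibleOfNonzero two_ne_zero
  obtain ⟨v, hv⟩ := LinearMap.BilinForm.exists_orthogonal_basis hBs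
  have hvo : ∀ i j, i ≠ j → g (v i : V) (v j) = 0 := fun i j hij => hv hij
  have hvn : ∀ i, g (v i : V) (v i) ≠ 0 := by
    intro i hi
    apply v.ne_zero i
    apply hEnd
    have : B (v i) = 0 := by
      apply v.ext
      intro j
      by_cases hij : i = j
      · subst hij; exact hi
      · exact hvo i j hij
    intro y
    exact LinearMap.congr_fun this y
  let w : Fin (Module.finrank ℝ E) → ℝ := fun i => (Real.sqrt |g (v i : V) (v i)|)⁻¹
  have hw : ∀ i, w i ≠ 0 := fun i =>
    inv_ne_zero (Real.sqrt_pos.mpr (abs_pos.mpr (hvn i))).ne'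
  have hw2 : ∀ i, w i * w i = |g (v i : V) (v i)|⁻¹ := fun i => by
    simp only [w]
    rw [← mul_inv, Real.mul_self_sqrt (abs_nonneg _)]
  let b := v.isUnitSMul (fun i => (hw i).isUnit)
  have hb : ∀ i, (b i : V) = w i • (v i : V) := fun i => by simp [b, Module.Basis.isUnitSMul_apply]
  have hbo : ∀ i j, i ≠ j → g (b i : V) (b j) = 0 := by
    intro i j hij
    simp [hb, hvo i j hij]
  have hbn : ∀ i, g (b i : V) (b i) = 1 ∨ g (b i : V) (b i) = -1 := by
    intro i
    have h1 : g (b i : V) (b i) = |g (v i : V) (v i)|⁻¹ * g (v i : V) (v i) := by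
      rw [← hw2, hb]; simp; ring
    rw [h1]
    rcases lt_or_gt_of_ne (hvn i) with h2 | h2
    · right; rw [abs_of_neg h2, inv_neg, neg_mul, inv_mul_cancel₀ h2.ne]
    · left; rw [abs_of_pos h2, inv_mul_cancel₀ h2.ne']
  have hφg : ∀ x y : E, g (φ x) (φ y) = - g (x : V) y := by
    intro x y
    rw [hcompat, hEη x (hEmem x)]; ring
  have key : ∀ F : Fin (Module.finrank ℝ E) ⊕ (Fin (Module.finrank ℝ E) ⊕ Unit) → V,
      F = Sum.elim (fun i => (b i : V)) (Sum.elim (fun i => φ (b i)) (fun _ : Unit => ξ)) →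
      LinearIndependent ℝ F ∧ Submodule.span ℝ (Set.range F) = ⊤ := by
    intro F hF
    constructor
    · apply LinearMap.BilinForm.linearIndependent_of_iIsOrtho (B := g)
      · rw [LinearMap.BilinForm.iIsOrtho_def]
        rintro (i | i | i) (j | j | j) hij <;> simp only [hF, Sum.elim_inl, Sum.elim_inr]
        · exact hbo i j (by simpa using hij)
        · exact hgXY _ _ (hEmem _) (hEmem _)
        · rw [hgξ, hEη _ (hEmem _)]
        · rw [hgsymm]; exact hgXY _ _ (hEmem _) (hEmem _)
        · rw [hφg, hbo i j (by simpa using hij), neg_zero]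
        · rw [hgξ, hηφ]
        · rw [hgsymm, hgξ, hEη _ (hEmem _)]
        · rw [hgsymm, hgξ, hηφ]
        · exact absurd rfl hij
      · rintro (i | i | i) <;> simp only [hF, Sum.elim_inl, Sum.elim_inr]
        · rcases hbn i with h1 | h1 <;> rw [h1] <;> norm_num
        · rw [hφg]; rcases hbn i with h1 | h1 <;> rw [h1] <;> norm_num
        · rw [hgξ, hηξ]; norm_num
    · rw [eq_top_iff]
      rintro z -
      have hmem : ∀ s, F s ∈ Submodule.span ℝ (Set.range F) :=
        fun s => Submodule.subset_span ⟨s, rfl⟩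
      have hsum : ∀ e : E, (e : V) = ∑ i, b.repr e i • (b i : V) := by
        intro e
        have h1 := congrArg E.subtype (b.sum_repr e)
        rw [map_sum] at h1
        exact h1.symm
      obtain ⟨e, he, f, hf, c, rfl⟩ := hdec z
      refine Submodule.add_mem _ (Submodule.add_mem _ ?_ ?_) ?_
      · have h1 := hsum ⟨e, he⟩
        simp only at h1
        rw [h1]
        refine Submodule.sum_mem _ fun i _ => Submodule.smul_mem _ _ ?_
        simpa [hF] using hmem (Sum.inl i)
      · have h1 := hsum ⟨f, hf⟩
        simp only at h1
        rw [h1, map_sum]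
        refine Submodule.sum_mem _ fun i _ => ?_
        rw [map_smul]
        refine Submodule.smul_mem _ _ ?_
        simpa [hF] using hmem (Sum.inr (Sum.inl i))
      · refine Submodule.smul_mem _ _ ?_
        simpa [hF] using hmem (Sum.inr (Sum.inr ()))
  obtain ⟨hli, hsp⟩ := key _ rfl
  have hn : Module.finrank ℝ E = n := by
    have := Module.finrank_eq_card_basis (Module.Basis.mk hli hsp.ge)
    simp at this
    omega
  clear_value b
  clear hb key
  clear_value E
  subst hn
  refine ⟨fun i => (b i : V), fun i => φ (b i), fun i => g (b i : V) (b i),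
    fun i => hEmem _, fun i => rfl, fun i => hEφ _ (hEmem _), hli, hsp, hbo, ?_, ?_, ?_, ?_, ?_,
    hbn, fun i => rfl, fun i => hφg _ _⟩
  · intro i j hij
    rw [hφg, hbo i j hij, neg_zero]
  · exact fun i j => hgXY _ _ (hEmem _) (hEmem _)
  · exact fun i => by rw [hgξ, hEη _ (hEmem _)]
  · exact fun i => by rw [hgξ, hηφ]
  · rw [hgξ, hηξ]
end

section
/- Let V be a 3-dimensional real vector space with a symmetric bilinear form g admitting a pseudo-orthonormal basis e₁, e₂, e₃, and let h be the endomorphism of V given by the Lorentzian canonical form (IV): h e₁ = λe₁ + e₃, h e₂ = λe₂, h e₃ = e₂ + λe₃ for a real number λ. If tr h = 0 then λ = 0, and then every vector ξ ∈ V with hξ = 0 lies in the span of e₂ and hence satisfies g(ξ, ξ) = 0. In particular there is no ξ ∈ V with hξ = 0 and g(ξ, ξ) = 1, so the tensor h of a 3-dimensional paracontact metric manifold can never have canonical form (IV). -/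
/-- On a 3-dimensional real vector space with a symmetric bilinear form
admitting a pseudo-orthonormal basis, an endomorphism `h` in the Lorentzian canonical form
(IV) (`he₁ = λe₁ + e₃`, `he₂ = λe₂`, `he₃ = e₂ + λe₃`) with `tr h = 0` has `λ = 0`, every
`ξ` with `hξ = 0` lies in the span of `e₂` (hence is null), and there is no `ξ` with
`hξ = 0` and `g(ξ,ξ) = 1`; so canonical form (IV) cannot occur for the tensor `h` of a
3-dimensional paracontact metric manifold. -/
theorem canonical_form_IV_impossible
    (V : Type*) [AddCommGroup V] [Module ℝ V] [FiniteDimensional ℝ V]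
    (hdim : Module.finrank ℝ V = 3)
    (g : LinearMap.BilinForm ℝ V)
    (hgsymm : ∀ x y : V, g x y = g y x)
    (e₁ e₂ e₃ : V)
    (hindep : LinearIndependent ℝ ![e₁, e₂, e₃])
    (hspan : Submodule.span ℝ {e₁, e₂, e₃} = ⊤)
    (h11 : g e₁ e₁ = 0) (h22 : g e₂ e₂ = 0) (h13 : g e₁ e₃ = 0) (h23 : g e₂ e₃ = 0)
    (h12 : g e₁ e₂ = 1) (h33 : g e₃ e₃ = 1)
    (h : V →ₗ[ℝ] V) (lam : ℝ)
    (hhe₁ : h e₁ = lam • e₁ + e₃)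
    (hhe₂ : h e₂ = lam • e₂)
    (hhe₃ : h e₃ = e₂ + lam • e₃)
    (htr : LinearMap.trace ℝ V h = 0) :
    lam = 0 ∧
    (∀ ξ : V, h ξ = 0 → ξ ∈ Submodule.span ℝ ({e₂} : Set V) ∧ g ξ ξ = 0) ∧
    ¬ ∃ ξ : V, h ξ = 0 ∧ g ξ ξ = 1 := by
  have hrange : ⊤ ≤ Submodule.span ℝ (Set.range ![e₁, e₂, e₃]) := by
    rw [← hspan]
    apply Submodule.span_mono
    rintro x (rfl | rfl | rfl)
    · exact ⟨0, rfl⟩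
    · exact ⟨1, rfl⟩
    · exact ⟨2, rfl⟩
  let b := Module.Basis.mk hindep hrange
  have b0 : b 0 = e₁ := by simp [b]
  have b1 : b 1 = e₂ := by simp [b]
  have b2 : b 2 = e₃ := by simp [b]
  have hlam : lam = 0 := by
    rw [LinearMap.trace_eq_matrix_trace ℝ b, Matrix.trace_fin_three] at htr
    simp only [LinearMap.toMatrix_apply, b0, b1, b2, hhe₁, hhe₂, hhe₃] at htr
    rw [← b0, ← b1, ← b2] at htr
    simp only [map_add, map_smul, Module.Basis.repr_self, Finsupp.add_apply,
      Finsupp.smul_apply, Finsupp.single_apply] at htr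
    simp at htr
    linarith
  have key : ∀ ξ : V, h ξ = 0 → ξ ∈ Submodule.span ℝ ({e₂} : Set V) ∧ g ξ ξ = 0 := by
    intro ξ hξ
    have hs := b.sum_repr ξ
    rw [Fin.sum_univ_three, b0, b1, b2] at hs
    generalize b.repr ξ 0 = x at hs
    generalize b.repr ξ 1 = y at hs
    generalize b.repr ξ 2 = z at hs
    have hz : x • b 2 + z • b 1 = 0 := by
      rw [← hs] at hξ
      simp only [map_add, map_smul, hhe₁, hhe₂, hhe₃, hlam, zero_smul, zero_add, add_zero,
        smul_zero] at hξ
      rw [b1, b2]; exact hξ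
    have hx : x = 0 := by
      have := congrArg (fun v => b.repr v 2) hz
      simpa [Finsupp.single_apply] using this
    have hz' : z = 0 := by
      have := congrArg (fun v => b.repr v 1) hz
      simpa [Finsupp.single_apply] using this
    have hy : ξ = y • e₂ := by rw [← hs, hx, hz']; simp
    refine ⟨Submodule.mem_span_singleton.2 ⟨y, hy.symm⟩, ?_⟩
    rw [hy]; simp [h22]
  refine ⟨hlam, key, ?_⟩
  rintro ⟨ξ, h0, h1⟩
  have := (key ξ h0).2
  linarith
end

section
/- Let V be a 3-dimensional real vector space, (φ, ξ, η, g) an almost paracontact metric structure on V (n = 1), and h a g-self-adjoint endomorphism of V with hξ = 0 and h∘φ = −φ∘h. Then h∘h = (tr(h∘h)/2)·(id − η⊗ξ); equivalently h∘h − φ∘φ = ((tr(h∘h) − 2)/2)·φ∘φ. (Via Zamkovoy's formula S̃(ξ,ξ) = −2n + tr h² with n = 1, this is the identity h̃² − φ̃² = (S̃(ξ,ξ)/2)φ̃² proved in the paper separately for each of the three canonical forms of h.) -/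
/-- On a 3-dimensional almost paracontact metric vector space, a
`g`-self-adjoint endomorphism `h` with `hξ = 0` and `hφ = −φh` satisfies
`h² = (tr(h²)/2)·(id − η⊗ξ)`, equivalently `h² − φ² = ((tr(h²) − 2)/2)·φ²`. -/
theorem h_squared_formula_dim_three
    (V : Type*) [AddCommGroup V] [Module ℝ V] [FiniteDimensional ℝ V]
    (hdim : Module.finrank ℝ V = 3)
    (φ : V →ₗ[ℝ] V) (ξ : V) (η : V →ₗ[ℝ] ℝ)
    (hηξ : η ξ = 1)
    (hφφ : ∀ x : V, φ (φ x) = x - η x • ξ)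
    (hDplus : Module.finrank ℝ (Module.End.eigenspace φ 1) = 1)
    (hDminus : Module.finrank ℝ (Module.End.eigenspace φ (-1)) = 1)
    (g : LinearMap.BilinForm ℝ V)
    (hgsymm : ∀ x y : V, g x y = g y x)
    (hgnd : ∀ x : V, (∀ y : V, g x y = 0) → x = 0)
    (hcompat : ∀ x y : V, g (φ x) (φ y) = - g x y + η x * η y)
    (h : V →ₗ[ℝ] V)
    (hsa : ∀ x y : V, g (h x) y = g x (h y))
    (hhξ : h ξ = 0)
    (hanti : ∀ x : V, h (φ x) = - φ (h x)) :
    (∀ x : V, h (h x) = (LinearMap.trace ℝ V (h ∘ₗ h) / 2) • (x - η x • ξ)) ∧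
    (∀ x : V, h (h x) - φ (φ x) = ((LinearMap.trace ℝ V (h ∘ₗ h) - 2) / 2) • φ (φ x)) := by
  have hηφ : ∀ x, η (φ x) = 0 := by
    intro x
    have h1 := hφφ (φ x)
    have h3 : η (φ (φ (φ (φ x)))) = 0 := by
      rw [hφφ (φ (φ x))]; simp [hηξ]
    have h4 : η (φ (φ x)) = 0 := by rw [hφφ]; simp [hηξ]
    have h5 : φ (φ ξ) = 0 := by rw [hφφ]; simp [hηξ]
    have h6 : φ ξ = η (φ ξ) • ξ := by
      have := hφφ (φ ξ)
      rw [h5, map_zero] at this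
      exact (sub_eq_zero.mp this.symm)
    have h7 : φ ξ = 0 := by
      have h8 : η (φ ξ) * η (φ ξ) = 0 := by
        have h9 : η (φ (φ ξ)) = 0 := by rw [h5, map_zero]
        rw [h6, map_smul, map_smul, smul_eq_mul] at h9
        exact h9
      rw [h6, mul_self_eq_zero.mp h8, zero_smul]
    have h10 : φ (φ (φ x)) = φ x := by
      rw [hφφ x, map_sub, map_smul, h7, smul_zero, sub_zero]
    rw [h10] at h1
    have h11 : η (φ x) • ξ = 0 := by
      have := sub_eq_self.mp h1.symm
      exact this
    have h12 := congrArg η h11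
    simpa [hηξ] using h12
  have hφ3 : ∀ x, φ (φ (φ x)) = φ x := by
    intro x
    rw [hφφ (φ x), hηφ, zero_smul, sub_zero]
  obtain ⟨⟨u, hu⟩, -, hu'⟩ := finrank_eq_one_iff'.mp hDplus
  obtain ⟨⟨v, hv⟩, -, hv'⟩ := finrank_eq_one_iff'.mp hDminus
  have hU : ∀ x, φ x = x → ∃ c : ℝ, c • u = x := by
    intro x hx
    obtain ⟨c, hc⟩ := hu' ⟨x, by rw [Module.End.mem_eigenspace_iff, one_smul, hx]⟩
    exact ⟨c, congrArg Subtype.val hc⟩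
  have hV : ∀ x, φ x = -x → ∃ c : ℝ, c • v = x := by
    intro x hx
    obtain ⟨c, hc⟩ := hv' ⟨x, by rw [Module.End.mem_eigenspace_iff, neg_one_smul, hx]⟩
    exact ⟨c, congrArg Subtype.val hc⟩
  rw [Module.End.mem_eigenspace_iff, one_smul] at hu
  rw [Module.End.mem_eigenspace_iff, neg_one_smul] at hv
  obtain ⟨a, ha⟩ := hV (h u) (by
    have := hanti u
    rw [hu] at this
    exact (neg_eq_iff_eq_neg.mpr this).symm)
  obtain ⟨b, hb⟩ := hU (h v) (by
    have := hanti v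
    rw [hv, map_neg] at this
    exact (neg_injective this).symm)
  have key : ∀ x, h (h x) = (a * b) • (x - η x • ξ) := by
    intro x
    obtain ⟨α, hα⟩ := hU (φ (φ x) + φ x) (by rw [map_add, hφ3, add_comm])
    obtain ⟨β, hβ⟩ := hV (φ (φ x) - φ x) (by rw [map_sub, hφ3, neg_sub])
    have e1 : x - η x • ξ = (1/2 : ℝ) • (α • u + β • v) := by
      rw [← hφφ, hα, hβ]; module
    have e2 : h (h x) = h (h (x - η x • ξ)) := by
      rw [map_sub, map_smul, hhξ, smul_zero, sub_zero]
    rw [e2, e1]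
    simp only [map_smul, map_add, ← ha, ← hb]
    module
  have htr : LinearMap.trace ℝ V (h ∘ₗ h) = 2 * (a * b) := by
    have : h ∘ₗ h = (a * b) • (LinearMap.id - η.smulRight ξ) := by
      ext x; simp [key]
    rw [this, map_smul, map_sub, LinearMap.trace_id, hdim, LinearMap.trace_smulRight, hηξ]
    simp; ring
  have e : (2 * (a * b)) / 2 = a * b := by ring
  rw [htr]
  refine ⟨fun x => by rw [e, key], fun x => ?_⟩
  rw [key, hφφ]
  module
end

section
/- Let (V, φ, ξ, η, g) be an almost contact metric vector space of dimension 2n+1 and let h be an endomorphism of V that is g-self-adjoint, anticommutes with φ, satisfies hξ = 0, and satisfies h∘h = (κ−1)·φ∘φ for a real constant κ < 1. Define φ̃ = (1/√(1−κ))·h and g̃(X, Y) = (1/√(1−κ))·g(X, (φ∘h)Y) + η(X)η(Y). Then: (a) φ̃∘φ̃ = id − η⊗ξ, φ̃ξ = 0, and η∘φ̃ = 0; (b) the eigenspaces of φ̃ in ker η for the eigenvalues +1 and −1 (namely the ±√(1−κ)-eigenspaces of h) each have dimension n; (c) g̃ is a symmetric nondegenerate bilinear form of signature (n+1, n) satisfying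 g̃(φ̃X, φ̃Y) = −g̃(X, Y) + η(X)η(Y); and (d) g̃(X, φ̃Y) = g(X, φY) for all X, Y. Hence (V, φ̃, ξ, η, g̃) is an almost paracontact metric vector space with the same fundamental 2-form as (φ, g). -/
theorem aux_eig_dim
    (n : ℕ) (V : Type*) [AddCommGroup V] [Module ℝ V] [FiniteDimensional ℝ V]
    (hdim : Module.finrank ℝ V = 2 * n + 1)
    (S T : V →ₗ[ℝ] V) (ξ : V) (η : V →ₗ[ℝ] ℝ) (hηξ : η ξ = 1)
    (hS : ∀ x, S (S x) = -x + η x • ξ)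
    (hT : ∀ x, T (T x) = x - η x • ξ) (hηT : ∀ x, η (T x) = 0)
    (hST : ∀ x, S (T x) = - T (S x)) :
    Module.finrank ℝ (Module.End.eigenspace T 1) = n ∧
    Module.finrank ℝ (Module.End.eigenspace T (-1)) = n := by
  have m1 : ∀ x, x ∈ Module.End.eigenspace T 1 ↔ T x = x := by
    intro x; rw [Module.End.mem_eigenspace_iff, one_smul]
  have m2 : ∀ x, x ∈ Module.End.eigenspace T (-1) ↔ T x = -x := by
    intro x; rw [Module.End.mem_eigenspace_iff, neg_one_smul]
  have e1 : ∀ x, T x = x → η x = 0 := fun x hx => by rw [← hx]; exact hηT x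
  have e2 : ∀ x, T x = -x → η x = 0 := fun x hx => by
    have := hηT x; rw [hx, map_neg] at this; linarith
  have i1 : ∀ x, η x = 0 → S x = 0 → x = 0 := fun x h1 h2 => by
    have := hS x; rw [h1, h2] at this; simpa using this
  have le1 : Module.finrank ℝ (Module.End.eigenspace T 1) ≤
      Module.finrank ℝ (Module.End.eigenspace T (-1)) := by
    have hm : ∀ x ∈ Module.End.eigenspace T 1, S x ∈ Module.End.eigenspace T (-1) := by
      intro x hx
      rw [m1] at hx; rw [m2]
      have := hST x; rw [hx] at this; exact (neg_eq_iff_eq_neg.2 this).symm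
    refine LinearMap.finrank_le_finrank_of_injective (f := S.restrict hm) ?_
    rw [← LinearMap.ker_eq_bot, LinearMap.ker_eq_bot']
    rintro ⟨x, hx⟩ h0
    have h1 : S x = 0 := by simpa using congrArg Subtype.val h0
    exact Subtype.ext (i1 x (e1 x ((m1 x).1 hx)) h1)
  have le2 : Module.finrank ℝ (Module.End.eigenspace T (-1)) ≤
      Module.finrank ℝ (Module.End.eigenspace T 1) := by
    have hm : ∀ x ∈ Module.End.eigenspace T (-1), S x ∈ Module.End.eigenspace T 1 := by
      intro x hx
      rw [m2] at hx; rw [m1]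
      have := hST x; rw [hx, map_neg] at this; exact (neg_injective this).symm
    refine LinearMap.finrank_le_finrank_of_injective (f := S.restrict hm) ?_
    rw [← LinearMap.ker_eq_bot, LinearMap.ker_eq_bot']
    rintro ⟨x, hx⟩ h0
    have h1 : S x = 0 := by simpa using congrArg Subtype.val h0
    exact Subtype.ext (i1 x (e2 x ((m2 x).1 hx)) h1)
  have hsup : Module.End.eigenspace T 1 ⊔ Module.End.eigenspace T (-1) = LinearMap.ker η := by
    apply le_antisymm
    · refine sup_le ?_ ?_
      · intro x hx; exact e1 x ((m1 x).1 hx)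
      · intro x hx; exact e2 x ((m2 x).1 hx)
    · intro x hx
      have hx : η x = 0 := hx
      have hTT := hT x
      rw [hx, zero_smul, sub_zero] at hTT
      refine Submodule.mem_sup.2 ⟨(1/2 : ℝ) • (x + T x), (m1 _).2 ?_, (1/2 : ℝ) • (x - T x), (m2 _).2 ?_, ?_⟩
      · rw [map_smul, map_add, hTT, add_comm]
      · rw [map_smul, map_sub, hTT]; module
      · module
  have hinf : Module.End.eigenspace T 1 ⊓ Module.End.eigenspace T (-1) = ⊥ := by
    rw [eq_bot_iff]
    rintro x ⟨h1, h2⟩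
    have h1 := (m1 x).1 h1
    have h2 := (m2 x).1 h2
    rw [h1] at h2
    have h3 : x = (1/2 : ℝ) • (x - -x) := by module
    rw [← h2, sub_self, smul_zero] at h3
    exact h3
  have hsum := Submodule.finrank_sup_add_finrank_inf_eq
    (Module.End.eigenspace T 1) (Module.End.eigenspace T (-1))
  rw [hsup, hinf, finrank_bot] at hsum
  have hr := LinearMap.finrank_range_add_finrank_ker η
  have hsurj : LinearMap.range η = ⊤ := by
    rw [LinearMap.range_eq_top]
    intro a
    exact ⟨a • ξ, by simp [hηξ]⟩
  rw [hsurj, finrank_top, Module.finrank_self, hdim] at hr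
  omega

/-- Let `(V, φ, ξ, η, g)` be an almost contact metric vector space of
dimension `2n+1` and let `h` be `g`-self-adjoint, anticommuting with `φ`, with `hξ = 0` and
`h² = (κ−1)φ²` for a constant `κ < 1`. Then `φ̃ = (1/√(1−κ))h` and
`g̃ = (1/√(1−κ))g(·, φh·) + η⊗η` define an almost paracontact metric structure on `V` with
the same fundamental 2-form: `φ̃² = id − η⊗ξ`, `φ̃ξ = 0`, `η∘φ̃ = 0`, the `±1`-eigenspaces
of `φ̃` (the `±√(1−κ)`-eigenspaces of `h`) have dimension `n`, `g̃` is symmetric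
nondegenerate of signature `(n+1, n)` with `g̃(φ̃X, φ̃Y) = −g̃(X,Y) + η(X)η(Y)`, and
`g̃(X, φ̃Y) = g(X, φY)`. -/
theorem canonical_paracontact_structure_from_contact
    (n : ℕ) (V : Type*) [AddCommGroup V] [Module ℝ V] [FiniteDimensional ℝ V]
    (hdim : Module.finrank ℝ V = 2 * n + 1)
    (φ : V →ₗ[ℝ] V) (ξ : V) (η : V →ₗ[ℝ] ℝ)
    (hηξ : η ξ = 1)
    (hφφ : ∀ x : V, φ (φ x) = -x + η x • ξ)
    (g : LinearMap.BilinForm ℝ V)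
    (hgsymm : ∀ x y : V, g x y = g y x)
    (hgpos : ∀ x : V, x ≠ 0 → 0 < g x x)
    (hcompat : ∀ x y : V, g (φ x) (φ y) = g x y - η x * η y)
    (hgskew : ∀ x y : V, g x (φ y) = - g (φ x) y)
    (h : V →ₗ[ℝ] V)
    (hsa : ∀ x y : V, g (h x) y = g x (h y))
    (hanti : ∀ x : V, h (φ x) = - φ (h x))
    (hhξ : h ξ = 0)
    (κ : ℝ) (hκ : κ < 1)
    (hh : ∀ x : V, h (h x) = (κ - 1) • φ (φ x))
    (lam : ℝ) (hlam : lam = Real.sqrt (1 - κ))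
    (φt : V →ₗ[ℝ] V) (hφt : ∀ x : V, φt x = lam⁻¹ • h x)
    (gt : V → V → ℝ)
    (hgt : ∀ x y : V, gt x y = lam⁻¹ * g x (φ (h y)) + η x * η y) :
    -- (a)
    (∀ x : V, φt (φt x) = x - η x • ξ) ∧
    φt ξ = 0 ∧
    (∀ x : V, η (φt x) = 0) ∧
    -- (b)
    Module.End.eigenspace φt 1 = Module.End.eigenspace h lam ∧
    Module.End.eigenspace φt (-1) = Module.End.eigenspace h (-lam) ∧
    Module.finrank ℝ (Module.End.eigenspace φt 1) = n ∧
    Module.finrank ℝ (Module.End.eigenspace φt (-1)) = n ∧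
    -- (c)
    (∀ x y : V, gt x y = gt y x) ∧
    (∀ x : V, (∀ y : V, gt x y = 0) → x = 0) ∧
    (∃ P : Submodule ℝ V, Module.finrank ℝ P = n + 1 ∧ ∀ x ∈ P, x ≠ 0 → 0 < gt x x) ∧
    (∀ P : Submodule ℝ V, (∀ x ∈ P, x ≠ 0 → 0 < gt x x) → Module.finrank ℝ P ≤ n + 1) ∧
    (∃ N : Submodule ℝ V, Module.finrank ℝ N = n ∧ ∀ x ∈ N, x ≠ 0 → gt x x < 0) ∧
    (∀ N : Submodule ℝ V, (∀ x ∈ N, x ≠ 0 → gt x x < 0) → Module.finrank ℝ N ≤ n) ∧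
    (∀ x y : V, gt (φt x) (φt y) = - gt x y + η x * η y) ∧
    -- (d)
    (∀ x y : V, gt x (φt y) = g x (φ y)) := by
  have hl0 : 0 < lam := by rw [hlam]; exact Real.sqrt_pos.2 (by linarith)
  have hl2 : lam * lam = 1 - κ := by rw [hlam]; exact Real.mul_self_sqrt (by linarith)
  have hli : lam⁻¹ * lam = 1 := inv_mul_cancel₀ hl0.ne'
  have hξ0 : ξ ≠ 0 := by rintro rfl; simp at hηξ
  have hηφ : ∀ x, η (φ x) = 0 := by
    intro x
    have h1 := hφφ (φ x)
    rw [hφφ x, map_add, map_neg, map_smul] at h1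
    have h2 : φ (φ (φ ξ)) = 0 := by rw [hφφ ξ, hηξ]; simp
    have h3 : φ (φ ξ) = 0 := by rw [hφφ ξ, hηξ]; simp
    have h4 : φ ξ = η (φ ξ) • ξ := by
      have := hφφ (φ ξ)
      rw [h2] at this
      exact (neg_add_eq_zero.1 this.symm)
    have h5 : φ ξ = 0 := by
      have h6 : η (φ ξ) • φ ξ = 0 := by rw [← map_smul, ← h4, h3]
      rcases smul_eq_zero.1 h6 with h7 | h7
      · rw [h4, h7, zero_smul]
      · exact h7
    rw [h5, smul_zero, add_zero] at h1
    have h8 : η (φ x) • ξ = 0 := by simpa using h1.symm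
    exact (smul_eq_zero.1 h8).resolve_right hξ0
  have hφξ : φ ξ = 0 := by
    have h2 : φ (φ (φ ξ)) = 0 := by rw [hφφ ξ, hηξ]; simp
    have := hφφ (φ ξ)
    rw [h2, hηφ] at this
    simpa using this.symm
  have hgξ : ∀ x, g x ξ = η x := by
    intro x
    have := hcompat x ξ
    rw [hφξ, hηξ, map_zero] at this
    linarith
  have hηh : ∀ x, η (h x) = 0 := by
    intro x; rw [← hgξ, hsa, hhξ, map_zero]
  have hhh : ∀ x, h (h x) = (lam * lam) • (x - η x • ξ) := by
    intro x; rw [hh, hφφ, hl2]; module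
  have hll : ∀ x : V, lam⁻¹ • lam⁻¹ • (lam * lam) • x = x := by
    intro x
    rw [smul_smul, smul_smul, show lam⁻¹ * lam⁻¹ * (lam * lam) = (lam⁻¹ * lam) * (lam⁻¹ * lam) by ring,
      hli, one_mul, one_smul]
  have ha1 : ∀ x : V, φt (φt x) = x - η x • ξ := by
    intro x; rw [hφt, hφt, map_smul, hhh, hll]
  have ha3 : ∀ x, η (φt x) = 0 := by
    intro x; rw [hφt, map_smul, hηh, smul_zero]
  have hb := aux_eig_dim n V hdim φ φt ξ η hηξ hφφ ha1 ha3 (by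
    intro x; rw [hφt, hφt, hanti, map_smul]; module)
  obtain ⟨T, hTd⟩ : ∃ T : V →ₗ[ℝ] V, ∀ x, T x = lam⁻¹ • φ (h x) :=
    ⟨lam⁻¹ • (φ ∘ₗ h), fun x => rfl⟩
  have hφφh : ∀ x, φ (φ (h x)) = - h x := by
    intro x; rw [hφφ, hηh]; simp
  have hTT : ∀ x, T (T x) = x - η x • ξ := by
    intro x
    rw [hTd, hTd, map_smul, map_smul, hanti, map_neg, hφφh, neg_neg, hhh, hll]
  have hηT : ∀ x, η (T x) = 0 := by
    intro x; rw [hTd, map_smul, hηφ, smul_zero]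
  have hc := aux_eig_dim n V hdim φ T ξ η hηξ hφφ hTT hηT (by
    intro x; rw [hTd, hTd, hanti, map_smul, map_neg]; module)
  have hTsa : ∀ x y, g (T x) y = g x (T y) := by
    intro x y
    have h1 : g (φ (h x)) y = g x (φ (h y)) := by
      have e1 := hgskew (h x) y
      rw [hsa, hanti, map_neg] at e1
      linarith
    rw [hTd, hTd]
    simp [h1]
  have hgT : ∀ x y, gt x y = g x (T y) + η x * η y := by
    intro x y; rw [hgt, hTd]; simp
  have hTξ : T ξ = 0 := by rw [hTd, hhξ]; simp
  have hd : ∀ x y : V, gt x (φt y) = g x (φ y) := by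
    intro x y
    have : T (φt y) = φ y := by
      rw [hTd, hφt, map_smul, hhh, map_smul, map_smul, hll, map_sub, map_smul, hφξ]
      simp
    rw [hgT, this, ha3]; simp
  have m1 : ∀ x, x ∈ Module.End.eigenspace T 1 ↔ T x = x := by
    intro x; rw [Module.End.mem_eigenspace_iff, one_smul]
  have m2 : ∀ x, x ∈ Module.End.eigenspace T (-1) ↔ T x = -x := by
    intro x; rw [Module.End.mem_eigenspace_iff, neg_one_smul]
  have hNneg : ∀ x ∈ Module.End.eigenspace T (-1), x ≠ 0 → gt x x < 0 := by
    intro x hx hx0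
    have hx := (m2 x).1 hx
    have hη0 : η x = 0 := by
      have := hηT x; rw [hx, map_neg] at this; linarith
    rw [hgT, hx, hη0, map_neg]
    have := hgpos x hx0
    linarith
  have hPpos : ∀ x ∈ Module.End.eigenspace T 1 ⊔ Submodule.span ℝ {ξ}, x ≠ 0 → 0 < gt x x := by
    intro x hx hx0
    obtain ⟨p, hp, q, hq, rfl⟩ := Submodule.mem_sup.1 hx
    obtain ⟨a, rfl⟩ := Submodule.mem_span_singleton.1 hq
    have hp := (m1 p).1 hp
    have hη0 : η p = 0 := by rw [← hp]; exact hηT p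
    have e : gt (p + a • ξ) (p + a • ξ) = g p p + a * a := by
      rw [hgT]
      simp [hp, hTξ, hη0, hηξ, hgsymm ξ p, hgξ]
    rw [e]
    by_cases hp0 : p = 0
    · have ha : a ≠ 0 := by
        rintro rfl; apply hx0; simp [hp0]
      rw [hp0]
      have := mul_self_pos.2 ha
      simpa using this
    · have := hgpos p hp0
      nlinarith [mul_self_nonneg a]
  have hPdim : Module.finrank ℝ
      (Module.End.eigenspace T 1 ⊔ Submodule.span ℝ {ξ} : Submodule ℝ V) = n + 1 := by
    have hs := Submodule.finrank_sup_add_finrank_inf_eq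
      (Module.End.eigenspace T 1) (Submodule.span ℝ {ξ})
    have hi : Module.End.eigenspace T 1 ⊓ Submodule.span ℝ {ξ} = ⊥ := by
      rw [eq_bot_iff]
      rintro x ⟨h1, h2⟩
      obtain ⟨a, rfl⟩ := Submodule.mem_span_singleton.1 h2
      have h1 := (m1 _).1 h1
      rw [map_smul, hTξ, smul_zero] at h1
      rw [← h1]; exact Submodule.zero_mem _
    rw [hi, finrank_bot, hc.1, finrank_span_singleton hξ0] at hs
    omega
  have key : ∀ P N : Submodule ℝ V, (∀ x ∈ P, x ≠ 0 → 0 < gt x x) →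
      (∀ x ∈ N, x ≠ 0 → gt x x < 0) →
      Module.finrank ℝ P + Module.finrank ℝ N ≤ 2 * n + 1 := by
    intro P N hP hN
    have hs := Submodule.finrank_sup_add_finrank_inf_eq P N
    have hi : P ⊓ N = ⊥ := by
      rw [eq_bot_iff]
      rintro x ⟨h1, h2⟩
      by_contra hx
      have hx : x ≠ 0 := hx
      linarith [hP x h1 hx, hN x h2 hx]
    rw [hi, finrank_bot] at hs
    have := Submodule.finrank_le (P ⊔ N)
    omega
  have hsymm : ∀ x y : V, gt x y = gt y x := by
    intro x y
    rw [hgT, hgT, ← hTsa, hgsymm, mul_comm]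
  refine ⟨ha1, by rw [hφt, hhξ, smul_zero], ha3, ?_, ?_, hb.1, hb.2, hsymm, ?_,
    ⟨_, hPdim, hPpos⟩, ?_, ⟨_, hc.2, hNneg⟩, ?_, ?_, hd⟩
  · ext x
    rw [Module.End.mem_eigenspace_iff, Module.End.mem_eigenspace_iff, hφt, one_smul,
      inv_smul_eq_iff₀ hl0.ne']
  · ext x
    rw [Module.End.mem_eigenspace_iff, Module.End.mem_eigenspace_iff, hφt, neg_one_smul,
      inv_smul_eq_iff₀ hl0.ne', smul_neg, neg_smul]
  · intro x hx
    have h1 : T x + η x • ξ = 0 := by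
      by_contra hne
      have h2 := hgpos _ hne
      have h3 := hx (T x + η x • ξ)
      have h4 : g (T x + η x • ξ) (T x + η x • ξ) = gt x (T x + η x • ξ) := by
        rw [hgT, ← hTsa, map_add g, LinearMap.add_apply, map_smul g, LinearMap.smul_apply,
          hgsymm ξ, hgξ, smul_eq_mul]
      linarith
    have h2 : η x = 0 := by
      have := congrArg η h1
      simpa [hηT, hηξ] using this
    rw [h2, zero_smul, add_zero] at h1
    have := hTT x
    rw [h1, h2] at this
    simpa using this.symm
  · intro P hP
    have := key P _ hP hNneg
    rw [hc.2] at this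
    omega
  · intro N hN
    have := key _ N hPpos hN
    rw [hPdim] at this
    omega
  · intro x y
    rw [hd, hgt, hφt, map_smul, LinearMap.smul_apply, hsa, hanti, map_neg, smul_eq_mul]
    ring
end

section
/- Let (V, φ, ξ, η, g) be an almost contact metric vector space of dimension 2n+1, let h be g-self-adjoint with h∘φ = −φ∘h, hξ = 0, and h∘h = (κ−1)·φ∘φ for a real constant κ < 1, and let μ be a real number. Set λ = √(1−κ), φ̃ = (1/λ)·h, g̃(X,Y) = (1/λ)·g(X, (φ∘h)Y) + η(X)η(Y), and define h̃ = (1/(2λ))·((2−μ)·φ∘h + 2(1−κ)·φ). Then: h̃ξ = 0; h̃∘φ̃ = −φ̃∘h̃; h̃ is g̃-self-adjoint (g̃(h̃X, Y) = g̃(X, h̃Y)); tr h̃ = 0; and h̃∘h̃ = (1+κ̃)·(id − η⊗ξ) where κ̃ = (1 − μ/2)² + κ − 2. -/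
/-- With the hypotheses of Statement 11 and a real `μ`, the tensor
`h̃ = (1/(2λ))((2−μ)φ∘h + 2(1−κ)φ)` (where `λ = √(1−κ)`) of the induced paracontact
structure satisfies `h̃ξ = 0`, `h̃φ̃ = −φ̃h̃`, is `g̃`-self-adjoint, has `tr h̃ = 0`, and
`h̃² = (1+κ̃)(id − η⊗ξ)` with `κ̃ = (1 − μ/2)² + κ − 2`. -/
theorem induced_h_tilde_properties
    (n : ℕ) (V : Type*) [AddCommGroup V] [Module ℝ V] [FiniteDimensional ℝ V]
    (hdim : Module.finrank ℝ V = 2 * n + 1)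
    (φ : V →ₗ[ℝ] V) (ξ : V) (η : V →ₗ[ℝ] ℝ)
    (hηξ : η ξ = 1)
    (hφφ : ∀ x : V, φ (φ x) = -x + η x • ξ)
    (g : LinearMap.BilinForm ℝ V)
    (hgsymm : ∀ x y : V, g x y = g y x)
    (hgpos : ∀ x : V, x ≠ 0 → 0 < g x x)
    (hcompat : ∀ x y : V, g (φ x) (φ y) = g x y - η x * η y)
    (hgskew : ∀ x y : V, g x (φ y) = - g (φ x) y)
    (h : V →ₗ[ℝ] V)
    (hsa : ∀ x y : V, g (h x) y = g x (h y))
    (hanti : ∀ x : V, h (φ x) = - φ (h x))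
    (hhξ : h ξ = 0)
    (κ : ℝ) (hκ : κ < 1)
    (hh : ∀ x : V, h (h x) = (κ - 1) • φ (φ x))
    (μ : ℝ)
    (lam : ℝ) (hlam : lam = Real.sqrt (1 - κ))
    (φt : V →ₗ[ℝ] V) (hφt : ∀ x : V, φt x = lam⁻¹ • h x)
    (gt : V → V → ℝ)
    (hgt : ∀ x y : V, gt x y = lam⁻¹ * g x (φ (h y)) + η x * η y)
    (ht : V →ₗ[ℝ] V)
    (hht : ∀ x : V, ht x = (2 * lam)⁻¹ • ((2 - μ) • φ (h x) + (2 * (1 - κ)) • φ x)) :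
    ht ξ = 0 ∧
    (∀ x : V, ht (φt x) = - φt (ht x)) ∧
    (∀ x y : V, gt (ht x) y = gt x (ht y)) ∧
    LinearMap.trace ℝ V ht = 0 ∧
    (∀ x : V, ht (ht x) = (1 + ((1 - μ / 2) ^ 2 + κ - 2)) • (x - η x • ξ)) := by
  have hpos : 0 < 1 - κ := by linarith
  have hl : lam ≠ 0 := by rw [hlam]; exact (Real.sqrt_pos.mpr hpos).ne'
  have hl2 : lam ^ 2 = 1 - κ := by rw [hlam]; exact Real.sq_sqrt hpos.le
  have hξ0 : ξ ≠ 0 := by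
    rintro rfl
    simp at hηξ
  have hφφξ : φ (φ ξ) = 0 := by rw [hφφ, hηξ]; simp
  have hφξ : φ ξ = 0 := by
    have h1 : φ ξ = η (φ ξ) • ξ := by
      have h2 := hφφ (φ ξ)
      rw [hφφξ, map_zero] at h2
      have h3 : φ ξ + 0 = φ ξ + (-φ ξ + η (φ ξ) • ξ) := by rw [← h2]
      simpa using h3
    have h2 : η (φ ξ) • φ ξ = 0 := by
      rw [← map_smul, ← h1, hφφξ]
    rcases smul_eq_zero.mp h2 with h3 | h3
    · rw [h1, h3, zero_smul]
    · exact h3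
  have hηφ : ∀ x, η (φ x) = 0 := by
    intro x
    have h1 := hφφ (φ x)
    rw [hφφ x, map_add, map_neg, map_smul, hφξ, smul_zero] at h1
    have h2 := add_left_cancel h1
    rcases smul_eq_zero.mp h2.symm with h3 | h3
    · exact h3
    · exact absurd h3 hξ0
  have hηh : ∀ x, η (h x) = 0 := by
    intro x
    have h1 := hh (h x)
    rw [hh x, map_smul, hφφ, hφφ, map_add, map_neg, map_smul, hhξ, smul_zero] at h1
    have h2 := add_left_cancel (smul_right_injective V (by linarith : κ - 1 ≠ 0) h1)
    rcases smul_eq_zero.mp h2.symm with h3 | h3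
    · exact h3
    · exact absurd h3 hξ0
  have hφφh : ∀ x, φ (φ (h x)) = - h x := by
    intro x; rw [hφφ, hηh]; simp
  have hφφφ : ∀ x, φ (φ (φ x)) = - φ x := by
    intro x; rw [hφφ, hηφ]; simp
  have hηht : ∀ x, η (ht x) = 0 := by
    intro x; rw [hht]; simp [hηφ]
  have hφht : ∀ x, φ (h (ht x)) = (2 * lam)⁻¹ • ((2 - μ) • h (h x) + (2 * (1 - κ)) • h x) := by
    intro x
    rw [hht]
    simp only [map_smul, map_add, hanti, map_neg, hφφh, neg_neg]
  have A : ∀ x : V, ht (φt x) = - φt (ht x) := by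
    intro x
    rw [hφt, hφt, hht, hht]
    simp only [map_smul, map_add, hanti, map_neg, hh, hφφφ]
    module
  have B : ∀ x, φt (φt x) = x - η x • ξ := by
    intro x
    rw [hφt, hφt, map_smul, hh, hφφ, smul_smul, smul_smul]
    have : lam⁻¹ * (lam⁻¹ * (κ - 1)) = -1 := by
      field_simp
      linarith
    rw [← mul_assoc] at this
    rw [this]
    module
  have C : ht ξ = 0 := by rw [hht, hhξ, hφξ]; simp
  refine ⟨C, A, ?_, ?_, ?_⟩
  · intro x y
    rw [hgt, hgt, hηht, hηht, hφht, hht]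
    simp only [map_smul, map_add, LinearMap.smul_apply, LinearMap.add_apply, hcompat, hηh, hsa]
    simp
  · have e1 : ht = (ht ∘ₗ φt) ∘ₗ φt := by
      ext x
      simp [B, C]
    have e2 : φt ∘ₗ (ht ∘ₗ φt) = - ((ht ∘ₗ φt) ∘ₗ φt) := by
      ext x
      simp [A]
    have e3 := LinearMap.trace_comp_comm' (ht ∘ₗ φt) φt
    rw [e2, map_neg, ← e1] at e3
    linarith
  · intro x
    rw [hht (ht x), hφht, hht x]
    simp only [map_smul, map_add, hh, hφφh, hφφ]
    have hk : κ = 1 - lam ^ 2 := by linarith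
    subst hk
    match_scalars <;> field_simp <;> ring
end

section
/- Let V be a 3-dimensional real vector space, (φ, ξ, η, g) an almost contact metric structure on V (n = 1), and h a g-self-adjoint endomorphism with h∘φ = −φ∘h, hξ = 0, and h∘h = (κ−1)·φ∘φ for a real constant κ < 1; set λ = √(1−κ) and g̃(X,Y) = (1/λ)·g(X, (φ∘h)Y) + η(X)η(Y). Let e ∈ ker η be a g-unit vector with he = λe. Then {e, φe, ξ} is a g-orthonormal basis of V, and with respect to g̃ it is a pseudo-orthonormal basis: g̃(e, e) = g̃(φe, φe) = g̃(e, ξ) = g̃(φe, ξ) = 0 and g̃(e, φe) = g̃(ξ, ξ) = 1. -/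
/-- On a 3-dimensional almost contact metric vector space with `h`
`g`-self-adjoint, anticommuting with `φ`, `hξ = 0`, `h² = (κ−1)φ²`, `κ < 1`, `λ = √(1−κ)`,
and `g̃ = (1/λ)g(·, φh·) + η⊗η`: if `e ∈ ker η` is a `g`-unit vector with `he = λe`, then
`{e, φe, ξ}` is a `g`-orthonormal basis of `V` which is pseudo-orthonormal for `g̃`:
`g̃(e,e) = g̃(φe,φe) = g̃(e,ξ) = g̃(φe,ξ) = 0` and `g̃(e,φe) = g̃(ξ,ξ) = 1`. -/
theorem phi_basis_is_pseudo_orthonormal_for_induced_metric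
    (V : Type*) [AddCommGroup V] [Module ℝ V] [FiniteDimensional ℝ V]
    (hdim : Module.finrank ℝ V = 3)
    (φ : V →ₗ[ℝ] V) (ξ : V) (η : V →ₗ[ℝ] ℝ)
    (hηξ : η ξ = 1)
    (hφφ : ∀ x : V, φ (φ x) = -x + η x • ξ)
    (g : LinearMap.BilinForm ℝ V)
    (hgsymm : ∀ x y : V, g x y = g y x)
    (hgpos : ∀ x : V, x ≠ 0 → 0 < g x x)
    (hcompat : ∀ x y : V, g (φ x) (φ y) = g x y - η x * η y)
    (hgskew : ∀ x y : V, g x (φ y) = - g (φ x) y)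
    (h : V →ₗ[ℝ] V)
    (hsa : ∀ x y : V, g (h x) y = g x (h y))
    (hanti : ∀ x : V, h (φ x) = - φ (h x))
    (hhξ : h ξ = 0)
    (κ : ℝ) (hκ : κ < 1)
    (hh : ∀ x : V, h (h x) = (κ - 1) • φ (φ x))
    (lam : ℝ) (hlam : lam = Real.sqrt (1 - κ))
    (gt : V → V → ℝ)
    (hgt : ∀ x y : V, gt x y = lam⁻¹ * g x (φ (h y)) + η x * η y)
    (e : V) (heη : η e = 0) (hge : g e e = 1) (heig : h e = lam • e) :
    LinearIndependent ℝ ![e, φ e, ξ] ∧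
    Submodule.span ℝ {e, φ e, ξ} = ⊤ ∧
    g (φ e) (φ e) = 1 ∧ g ξ ξ = 1 ∧
    g e (φ e) = 0 ∧ g e ξ = 0 ∧ g (φ e) ξ = 0 ∧
    gt e e = 0 ∧ gt (φ e) (φ e) = 0 ∧ gt e ξ = 0 ∧ gt (φ e) ξ = 0 ∧
    gt e (φ e) = 1 ∧ gt ξ ξ = 1 := by
  have hξ0 : ξ ≠ 0 := by
    rintro rfl
    simp at hηξ
  have hφφξ : φ (φ ξ) = 0 := by rw [hφφ, hηξ]; simp
  have hφξ : φ ξ = 0 := by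
    have h1 : φ ξ = η (φ ξ) • ξ := by
      have h2 := hφφ (φ ξ)
      rw [hφφξ, map_zero] at h2
      exact (neg_add_eq_zero.mp h2.symm)
    have h3 : (η (φ ξ) * η (φ ξ)) • ξ = 0 := by
      have h4 := hφφξ
      rw [h1, map_smul, h1, smul_smul] at h4
      simpa [hηξ] using h4
    have h5 : η (φ ξ) = 0 := by
      rcases smul_eq_zero.mp h3 with h6 | h6
      · exact mul_self_eq_zero.mp h6
      · exact absurd h6 hξ0
    rw [h1, h5, zero_smul]
  have hφφe : φ (φ e) = -e := by rw [hφφ, heη]; simp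
  have hηφe : η (φ e) = 0 := by
    have h1 := hφφ (φ e)
    rw [hφφe, map_neg] at h1
    have h2 : η (φ e) • ξ = 0 := by simpa using h1
    exact (smul_eq_zero.mp h2).resolve_right hξ0
  have a1 : g (φ e) (φ e) = 1 := by rw [hcompat, hge, heη]; simp
  have a2 : g ξ ξ = 1 := by
    have h1 := hcompat ξ ξ
    rw [hφξ, hηξ, map_zero] at h1
    linarith
  have a3 : g e (φ e) = 0 := by
    have h1 := hgskew e e
    rw [hgsymm (φ e) e] at h1
    linarith
  have a4 : g e ξ = 0 := by
    have h1 := hcompat e ξ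
    rw [hφξ, heη, map_zero] at h1
    linarith
  have a5 : g (φ e) ξ = 0 := by
    have h1 := hgskew e ξ
    rw [hφξ, map_zero] at h1
    linarith
  have hl : lam ≠ 0 := by
    rw [hlam]
    exact (Real.sqrt_pos.mpr (by linarith)).ne'
  have li : LinearIndependent ℝ ![e, φ e, ξ] := by
    rw [Fintype.linearIndependent_iff]
    intro c hc
    simp only [Fin.sum_univ_three, Matrix.cons_val] at hc
    have b0 : c 0 = 0 := by
      have h1 := congrArg (g e) hc
      simpa [hge, a3, a4] using h1
    have b1 : c 1 = 0 := by
      have h1 := congrArg (g (φ e)) hc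
      simpa [a1, a5, hgsymm (φ e) e, a3] using h1
    have b2 : c 2 = 0 := by
      have h1 := congrArg η hc
      simpa [heη, hηφe, hηξ] using h1
    intro i
    fin_cases i
    · exact b0
    · exact b1
    · exact b2
  refine ⟨li, ?_, a1, a2, a3, a4, a5, ?_, ?_, ?_, ?_, ?_, ?_⟩
  · have h1 := li.span_eq_top_of_card_eq_finrank' (by simp [hdim])
    have h2 : Set.range ![e, φ e, ξ] = {e, φ e, ξ} := by
      simp only [Matrix.range_cons, Matrix.range_empty, Set.union_empty, Set.singleton_union]
    rw [← h2]
    exact h1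
  · rw [hgt, heig]; simp [a3, heη]
  · rw [hgt, hanti, heig]
    simp [hφφe, hηφe, hgsymm (φ e) e, a3]
  · rw [hgt, hhξ]; simp [heη]
  · rw [hgt, hhξ]; simp [hηφe]
  · rw [hgt, hanti, heig]
    simp [hφφe, hηφe, hge, hl]
  · rw [hgt, hhξ]; simp [hηξ]
end

section
/- Let V be a 3-dimensional real vector space, (φ, ξ, η, g) an almost contact metric structure on V (n = 1), and h a g-self-adjoint endomorphism with h∘φ = −φ∘h, hξ = 0, and h∘h = (κ−1)·φ∘φ for a real constant κ < 1; set λ = √(1−κ), φ̃ = (1/λ)h, g̃(X,Y) = (1/λ)·g(X, (φ∘h)Y) + η(X)η(Y), and for a real μ let h̃ = (1/(2λ))·((2−μ)·φ∘h + 2(1−κ)·φ). Let e ∈ ker η be a g-unit vector with he = λe, and put ẽ₁ = (e − φe)/√2 and ẽ₂ = (e + φe)/√2. Then ẽ₂ = φ̃ẽ₁; the basis {ẽ₁, ẽ₂, ξ} is g̃-orthogonal with g̃(ẽ₁, ẽ₁) = −1, g̃(ẽ₂, ẽ₂) = 1, g̃(ξ, ξ) = 1; and the matrix of h̃ is given by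 h̃ẽ₁ = (μ/2 − 1)ẽ₁ + λẽ₂, h̃ẽ₂ = −λẽ₁ + (1 − μ/2)ẽ₂, h̃ξ = 0. -/
/-- In the setting of the canonical paracontact structure induced on a
3-dimensional non-Sasakian contact metric `(κ, μ, ν)`-space, with `λ = √(1−κ)`,
`φ̃ = (1/λ)h`, `g̃ = (1/λ)g(·, φh·) + η⊗η`, `h̃ = (1/(2λ))((2−μ)φ∘h + 2(1−κ)φ)`, and a
`g`-unit `e ∈ ker η` with `he = λe`, the vectors `ẽ₁ = (e − φe)/√2`, `ẽ₂ = (e + φe)/√2`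
satisfy `ẽ₂ = φ̃ẽ₁`, form together with `ξ` a `g̃`-orthogonal basis with
`g̃(ẽ₁,ẽ₁) = −1`, `g̃(ẽ₂,ẽ₂) = 1`, `g̃(ξ,ξ) = 1`, and
`h̃ẽ₁ = (μ/2 − 1)ẽ₁ + λẽ₂`, `h̃ẽ₂ = −λẽ₁ + (1 − μ/2)ẽ₂`, `h̃ξ = 0`. -/
theorem matrix_of_h_tilde
    (V : Type*) [AddCommGroup V] [Module ℝ V] [FiniteDimensional ℝ V]
    (hdim : Module.finrank ℝ V = 3)
    (φ : V →ₗ[ℝ] V) (ξ : V) (η : V →ₗ[ℝ] ℝ)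
    (hηξ : η ξ = 1)
    (hφφ : ∀ x : V, φ (φ x) = -x + η x • ξ)
    (g : LinearMap.BilinForm ℝ V)
    (hgsymm : ∀ x y : V, g x y = g y x)
    (hgpos : ∀ x : V, x ≠ 0 → 0 < g x x)
    (hcompat : ∀ x y : V, g (φ x) (φ y) = g x y - η x * η y)
    (hgskew : ∀ x y : V, g x (φ y) = - g (φ x) y)
    (h : V →ₗ[ℝ] V)
    (hsa : ∀ x y : V, g (h x) y = g x (h y))
    (hanti : ∀ x : V, h (φ x) = - φ (h x))
    (hhξ : h ξ = 0)
    (κ : ℝ) (hκ : κ < 1)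
    (hh : ∀ x : V, h (h x) = (κ - 1) • φ (φ x))
    (μ : ℝ)
    (lam : ℝ) (hlam : lam = Real.sqrt (1 - κ))
    (φt : V →ₗ[ℝ] V) (hφt : ∀ x : V, φt x = lam⁻¹ • h x)
    (gt : V → V → ℝ)
    (hgt : ∀ x y : V, gt x y = lam⁻¹ * g x (φ (h y)) + η x * η y)
    (ht : V →ₗ[ℝ] V)
    (hht : ∀ x : V, ht x = (2 * lam)⁻¹ • ((2 - μ) • φ (h x) + (2 * (1 - κ)) • φ x))
    (e : V) (heη : η e = 0) (hge : g e e = 1) (heig : h e = lam • e)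
    (f₁ f₂ : V)
    (hf₁ : f₁ = (Real.sqrt 2)⁻¹ • (e - φ e))
    (hf₂ : f₂ = (Real.sqrt 2)⁻¹ • (e + φ e)) :
    f₂ = φt f₁ ∧
    LinearIndependent ℝ ![f₁, f₂, ξ] ∧
    Submodule.span ℝ {f₁, f₂, ξ} = ⊤ ∧
    gt f₁ f₁ = -1 ∧ gt f₂ f₂ = 1 ∧ gt ξ ξ = 1 ∧
    gt f₁ f₂ = 0 ∧ gt f₁ ξ = 0 ∧ gt f₂ ξ = 0 ∧
    ht f₁ = (μ / 2 - 1) • f₁ + lam • f₂ ∧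
    ht f₂ = -(lam • f₁) + (1 - μ / 2) • f₂ ∧
    ht ξ = 0 := by
  have hξ0 : ξ ≠ 0 := by
    rintro rfl
    simp at hηξ
  have hφξ : φ ξ = 0 := by
    have h2 : φ (φ ξ) = 0 := by rw [hφφ, hηξ]; simp
    have h3 := hφφ (φ ξ)
    rw [h2, map_zero] at h3
    have h4 : φ ξ = η (φ ξ) • ξ := by
      have := eq_neg_add_iff_add_eq.mp h3
      simpa using this
    have h5 : φ (φ ξ) = η (φ ξ) • φ ξ := by
      conv_lhs => rw [h4]
      rw [map_smul]
    rw [h2] at h5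
    rcases smul_eq_zero.mp h5.symm with h6 | h6
    · rw [h4, h6, zero_smul]
    · exact h6
  have hηφ : ∀ x, η (φ x) = 0 := by
    intro x
    have h1 := hφφ (φ x)
    rw [hφφ x, map_add, map_neg, map_smul, hφξ, smul_zero] at h1
    have h2 : η (φ x) • ξ = 0 := (add_left_cancel h1).symm
    exact (smul_eq_zero.mp h2).resolve_right hξ0
  have hl : 0 < lam := by rw [hlam]; exact Real.sqrt_pos.mpr (by linarith)
  have hl2 : 1 - κ = lam * lam := by rw [hlam, Real.mul_self_sqrt (by linarith)]
  have hs : (Real.sqrt 2)⁻¹ * (Real.sqrt 2)⁻¹ = 1 / 2 := by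
    rw [← mul_inv, Real.mul_self_sqrt (by norm_num)]; norm_num
  have hee : g e (φ e) = 0 := by
    have h1 := hgskew e e
    have h2 := hgsymm (φ e) e
    linarith
  have hee' : g (φ e) e = 0 := by rw [hgsymm, hee]
  have hff : g (φ e) (φ e) = 1 := by rw [hcompat, heη, hge]; simp
  have hφ1 : φ f₁ = f₂ := by
    rw [hf₁, hf₂, map_smul, map_sub, hφφ, heη]; congr 1; module
  have hφ2 : φ f₂ = -f₁ := by
    rw [hf₁, hf₂, map_smul, map_add, hφφ, heη]; module
  have hh1 : h f₁ = lam • f₂ := by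
    rw [hf₁, hf₂, map_smul, map_sub, hanti, heig, map_smul]; module
  have hh2 : h f₂ = lam • f₁ := by
    rw [hf₁, hf₂, map_smul, map_add, hanti, heig, map_smul]; module
  have hη1 : η f₁ = 0 := by rw [hf₁, map_smul, map_sub, hηφ, heη]; simp
  have hη2 : η f₂ = 0 := by rw [hf₂, map_smul, map_add, hηφ, heη]; simp
  have g11 : g f₁ f₁ = 1 := by
    rw [hf₁]
    simp only [map_smul, map_sub, LinearMap.smul_apply, LinearMap.sub_apply, smul_eq_mul,
      hge, hee, hee', hff]
    linear_combination 2 * hs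
  have g22 : g f₂ f₂ = 1 := by rw [← hφ1, hcompat, g11, hη1]; simp
  have g12 : g f₁ f₂ = 0 := by
    have h1 := hgskew f₁ f₁
    have h2 := hgsymm (φ f₁) f₁
    rw [hφ1] at h1 h2
    linarith
  have g21 : g f₂ f₁ = 0 := by rw [hgsymm, g12]
  have hli : LinearIndependent ℝ ![f₁, f₂, ξ] := by
    rw [Fintype.linearIndependent_iff]
    intro c hc
    simp only [Fin.sum_univ_three, Matrix.cons_val] at hc
    have c2 : c 2 = 0 := by
      have := congrArg η hc
      simpa [hη1, hη2, hηξ] using this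
    rw [c2, zero_smul, add_zero] at hc
    have c0 : c 0 = 0 := by
      have := congrArg (g f₁) hc
      simpa [g11, g12] using this
    have c1 : c 1 = 0 := by
      have := congrArg (g f₂) hc
      simpa [g21, g22] using this
    intro i
    fin_cases i
    · exact c0
    · exact c1
    · exact c2
  refine ⟨?_, hli, ?_, ?_, ?_, ?_, ?_, ?_, ?_, ?_, ?_, ?_⟩
  · rw [hφt, hh1, smul_smul, inv_mul_cancel₀ hl.ne', one_smul]
  · have := hli.span_eq_top_of_card_eq_finrank (by simp [hdim])
    rw [← this]
    congr 1
    simp only [Matrix.range_cons, Matrix.range_empty, Set.union_empty, Set.singleton_union]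
  · rw [hgt, hh1, map_smul, hφ2, hη1]
    simp [g11, hl.ne']
  · rw [hgt, hh2, map_smul, hφ1, hη2]
    simp [g22, hl.ne']
  · rw [hgt, hhξ, hηξ]; simp
  · rw [hgt, hh2, map_smul, hφ1, hη1]; simp [g12]
  · rw [hgt, hhξ, hη1]; simp
  · rw [hgt, hhξ, hη2]; simp
  · rw [hht, hh1, map_smul, hφ2, hφ1, hl2]
    match_scalars <;> field_simp <;> ring
  · rw [hht, hh2, map_smul, hφ2, hφ1, hl2]
    match_scalars <;> field_simp
  · rw [hht, hhξ, hφξ]; simp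
end
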